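/- arXiv:1508.04644 — 5 statements merged into one kernel-verified Lean document; each statement's English description precedes it below -/
import Mathlib

section
/- For a finite undirected graph G with capacity function c taking values in powers of a fixed integer d > 0 on every edge, the quantum max-flow equals the quantum min-cut: QMF(G,c) = QMC(G,c). -/
open scoped Classical

/-- A tensor-network template: a finite undirected graph with edge set `E`, internal
vertices `V`, input open ends `S`, output open ends `T`, and a capacity on each edge.
Each edge has two ends (`ends e 0` and `ends e 1`), each attached either to an internal
vertex or to an open end; each open end is the end of exactly one edge. -/
structure TN where
  V : Type
  E : Type
  S : Type
  T : Type
  fV : Fintype V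
  dV : DecidableEq V
  fE : Fintype E
  dE : DecidableEq E
  fS : Fintype S
  dS : DecidableEq S
  fT : Fintype T
  dT : DecidableEq T
  /-- The capacity (local Hilbert space dimension) of each edge. -/
  c : E → ℕ
  c_pos : ∀ e, 0 < c e
  /-- The two ends of each edge attach to internal vertices or open ends. -/
  ends : E → Fin 2 → V ⊕ S ⊕ T
  /-- Each input open end is the end of exactly one edge. -/
  openS : ∀ u : S, ∃! p : E × Fin 2, ends p.1 p.2 = Sum.inr (Sum.inl u)
  /-- Each output open end is the end of exactly one edge. -/
  openT : ∀ u : T, ∃! p : E × Fin 2, ends p.1 p.2 = Sum.inr (Sum.inr u)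

attribute [instance] TN.fV TN.dV TN.fE TN.dE TN.fS TN.dS TN.fT TN.dT

namespace TN

variable (N : TN)

/-- The edge-ends incident to an internal vertex `v`. -/
def Legs (v : N.V) : Type := {p : N.E × Fin 2 // N.ends p.1 p.2 = Sum.inl v}

noncomputable instance (v : N.V) : Fintype (N.Legs v) := by unfold Legs; infer_instance

/-- A tensor assignment: a tensor at each internal vertex, i.e. a complex number for each
choice of an index on each incident edge-end. -/
def Assignment : Type :=
  (v : N.V) → (((p : N.Legs v) → Fin (N.c p.1.1)) → ℂ)

noncomputable instance : TopologicalSpace N.Assignment := by unfold Assignment; infer_instance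

/-- The edge whose open end is the input `u`. -/
noncomputable def inEdge (u : N.S) : N.E := (N.openS u).choose.1

/-- The edge whose open end is the output `u`. -/
noncomputable def outEdge (u : N.T) : N.E := (N.openT u).choose.1

/-- Multi-indices on the input edges; a basis of the input space `V_S`. -/
def InIdx : Type := (u : N.S) → Fin (N.c (N.inEdge u))

/-- Multi-indices on the output edges; a basis of the output space `V_T`. -/
def OutIdx : Type := (u : N.T) → Fin (N.c (N.outEdge u))

noncomputable instance : Fintype N.InIdx := by unfold InIdx; infer_instance
noncomputable instance : Fintype N.OutIdx := by unfold OutIdx; infer_instance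
noncomputable instance : DecidableEq N.InIdx := by unfold InIdx; infer_instance
noncomputable instance : DecidableEq N.OutIdx := by unfold OutIdx; infer_instance

/-- The matrix of the linear map `β(G,c;𝒯) : V_S → V_T` obtained by contracting all
internal edges of the tensor network. -/
noncomputable def β (𝒯 : N.Assignment) : Matrix N.OutIdx N.InIdx ℂ :=
  fun iT iS => ∑ W : (e : N.E) → Fin (N.c e),
    if (∀ u : N.S, W (N.inEdge u) = iS u) ∧ (∀ u : N.T, W (N.outEdge u) = iT u) then
      ∏ v : N.V, 𝒯 v (fun p => W p.1.1)
    else 0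

/-- The quantum max-flow: the maximal rank of the contracted linear map over all
tensor assignments. -/
noncomputable def QMF : ℕ := sSup {r : ℕ | ∃ 𝒯 : N.Assignment, (N.β 𝒯).rank = r}

/-- `C` is an edge cut set: for some partition of vertices and open ends into an `S`-side
and a `T`-side, `C` is exactly the set of edges crossing the partition. -/
def IsCutSet (C : Finset N.E) : Prop :=
  ∃ f : N.V ⊕ N.S ⊕ N.T → Bool,
    (∀ u : N.S, f (Sum.inr (Sum.inl u)) = false) ∧
    (∀ u : N.T, f (Sum.inr (Sum.inr u)) = true) ∧
    (∀ e : N.E, e ∈ C ↔ f (N.ends e 0) ≠ f (N.ends e 1))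

/-- The quantum min-cut: the minimum over edge cut sets of the product of capacities. -/
noncomputable def QMC : ℕ :=
  sInf {m : ℕ | ∃ C : Finset N.E, N.IsCutSet C ∧ m = ∏ e ∈ C, N.c e}

end TN

section Flow
set_option linter.unusedSectionVars false
variable {U X : Type} [Fintype U] [Fintype X]

noncomputable def fdiv (a b : U → X) (f : U → ℤ) (x : X) : ℤ :=
  ∑ u, f u * ((if b u = x then 1 else 0) - (if a u = x then 1 else 0))

def fok (a b : U → X) (src snk : X → Prop) (u : U) (z : ℤ) : Prop :=
  (-1 ≤ z ∧ z ≤ 1) ∧ (z = 1 → ¬ snk (a u) ∧ ¬ src (b u)) ∧ (z = -1 → ¬ snk (b u) ∧ ¬ src (a u))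

def fres (a b : U → X) (src snk : X → Prop) (f : U → ℤ) (x y : X) : Prop :=
  ∃ u, (a u = x ∧ b u = y ∧ fok a b src snk u (f u + 1)) ∨
    (b u = x ∧ a u = y ∧ fok a b src snk u (f u - 1))

def freach (a b : U → X) (src snk : X → Prop) (f : U → ℤ) : ℕ → X → Prop
  | 0, x => src x
  | n + 1, y => freach a b src snk f n y ∨
      ∃ x, freach a b src snk f n x ∧ fres a b src snk f x y

theorem fdiv_update (a b : U → X) (f : U → ℤ) (u : U) (t : ℤ) (x : X) :
    fdiv a b (Function.update f u (f u + t)) x =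
      fdiv a b f x + t * ((if b u = x then 1 else 0) - (if a u = x then 1 else 0)) := by
  unfold fdiv
  have : ∀ w, Function.update f u (f u + t) w = f w + if w = u then t else 0 := by
    intro w
    by_cases h : w = u
    · subst h; simp
    · simp [h]
  simp only [this, add_mul, Finset.sum_add_distrib, ite_mul, zero_mul,
    Finset.sum_ite_eq', Finset.mem_univ, if_true]

theorem freach_aug (a b : U → X) (src snk : X → Prop) (f : U → ℤ)
    (hf : ∀ u, fok a b src snk u (f u)) (n : ℕ) : ∀ x, freach a b src snk f n x →
    ∃ s f', src s ∧ (∀ u, fok a b src snk u (f' u)) ∧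
      (∀ u, f' u ≠ f u → freach a b src snk f n (a u) ∧ freach a b src snk f n (b u)) ∧
      ∀ z, fdiv a b f' z = fdiv a b f z + (if x = z then 1 else 0) - (if s = z then 1 else 0) := by
  induction n with
  | zero =>
    intro x hx
    exact ⟨x, f, hx, hf, fun u hu => absurd rfl hu, fun z => by ring⟩
  | succ n ih =>
    intro y hy
    by_cases hyn : freach a b src snk f n y
    · obtain ⟨s, f', h1, h2, h3, h4⟩ := ih y hyn
      exact ⟨s, f', h1, h2, fun u hu => ⟨Or.inl (h3 u hu).1, Or.inl (h3 u hu).2⟩, h4⟩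
    · obtain ⟨x, hx, hxy⟩ := hy.resolve_left hyn
      obtain ⟨s, f', h1, h2, h3, h4⟩ := ih x hx
      obtain ⟨u, hu⟩ := hxy
      have key : ∃ t : ℤ, fok a b src snk u (f u + t) ∧ f' u = f u ∧
          (∀ z, t * ((if b u = z then 1 else 0) - (if a u = z then 1 else 0)) =
            (if y = z then 1 else 0) - (if x = z then (1:ℤ) else 0)) ∧
          freach a b src snk f (n+1) (a u) ∧ freach a b src snk f (n+1) (b u) := by
        have hx' : freach a b src snk f (n+1) x := Or.inl hx
        rcases hu with ⟨rfl, rfl, ho⟩ | ⟨rfl, rfl, ho⟩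
        · refine ⟨1, ho, ?_, fun z => by ring, hx', hy⟩
          by_contra hne
          exact hyn (h3 u hne).2
        · refine ⟨-1, by simpa [sub_eq_add_neg] using ho, ?_, fun z => by ring, hy, hx'⟩
          by_contra hne
          exact hyn (h3 u hne).1
      obtain ⟨t, k1, k2, k3, k4, k5⟩ := key
      refine ⟨s, Function.update f' u (f' u + t), h1, ?_, ?_, ?_⟩
      · intro w
        by_cases hw : w = u
        · subst hw; simpa [k2] using k1
        · simpa [hw] using h2 w
      · intro w hw
        by_cases hwu : w = u
        · subst hwu; exact ⟨k4, k5⟩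
        · rw [Function.update_of_ne hwu] at hw
          exact ⟨Or.inl (h3 w hw).1, Or.inl (h3 w hw).2⟩
      · intro z
        rw [fdiv_update, k3, h4]; ring

theorem fmaxflow (a b : U → X) (src snk : X → Prop) (hdis : ∀ x, src x → ¬ snk x) :
    ∃ f : U → ℤ, (∀ u, fok a b src snk u (f u)) ∧
      (∀ x, ¬ src x → ¬ snk x → fdiv a b f x = 0) ∧
      ∃ R : X → Prop, (∀ x, src x → R x) ∧ (∀ x, snk x → ¬ R x) ∧
        ∀ u, (R (a u) → ¬ R (b u) → f u = 1) ∧ (R (b u) → ¬ R (a u) → f u = -1) := by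
  let A : Set (U → ℤ) := {f | (∀ u, fok a b src snk u (f u)) ∧
      (∀ x, ¬ src x → ¬ snk x → fdiv a b f x = 0)}
  have hfin : A.Finite := by
    apply (Set.finite_Icc (fun _ => -1 : U → ℤ) (fun _ => 1)).subset
    intro f hf
    exact ⟨fun u => (hf.1 u).1.1, fun u => (hf.1 u).1.2⟩
  have hne : A.Nonempty := ⟨fun _ => 0, fun u => by simp [fok], fun x _ _ => by simp [fdiv]⟩
  obtain ⟨f, hfA, hmax⟩ := Set.exists_max_image A
    (fun f => ∑ x with snk x, fdiv a b f x) hfin hne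
  refine ⟨f, hfA.1, hfA.2, fun x => ∃ n, freach a b src snk f n x, fun x hx => ⟨0, hx⟩, ?_, ?_⟩
  · rintro x hx ⟨n, hn⟩
    obtain ⟨s, f', h1, h2, -, h4⟩ := freach_aug a b src snk f hfA.1 n x hn
    have : f' ∈ A := by
      refine ⟨h2, fun z hz1 hz2 => ?_⟩
      rw [h4, hfA.2 z hz1 hz2, if_neg, if_neg]
      · simp
      · rintro rfl; exact hz1 h1
      · rintro rfl; exact hz2 hx
    have hm := hmax f' this
    simp only [h4, Finset.sum_add_distrib, Finset.sum_sub_distrib] at hm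
    rw [Finset.sum_ite_eq, Finset.sum_ite_eq, if_pos (by simpa using hx),
      if_neg (by simpa using hdis s h1)] at hm
    omega
  · intro u
    have hno : ∀ x, snk x → ¬ ∃ n, freach a b src snk f n x := by
      rintro x hx ⟨n, hn⟩
      obtain ⟨s, f', h1, h2, -, h4⟩ := freach_aug a b src snk f hfA.1 n x hn
      have : f' ∈ A := by
        refine ⟨h2, fun z hz1 hz2 => ?_⟩
        rw [h4, hfA.2 z hz1 hz2, if_neg, if_neg]
        · simp
        · rintro rfl; exact hz1 h1
        · rintro rfl; exact hz2 hx
      have hm := hmax f' this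
      simp only [h4, Finset.sum_add_distrib, Finset.sum_sub_distrib] at hm
      rw [Finset.sum_ite_eq, Finset.sum_ite_eq, if_pos (by simpa using hx),
        if_neg (by simpa using hdis s h1)] at hm
      omega
    have hok := hfA.1 u
    constructor
    · rintro ⟨n, hn⟩ hb
      by_contra hne
      apply hb
      refine ⟨n + 1, Or.inr ⟨a u, hn, u, Or.inl ⟨rfl, rfl, ?_⟩⟩⟩
      have hbs : ¬ src (b u) := fun h => hb ⟨0, h⟩
      have has : ¬ snk (a u) := fun h => hno _ h ⟨n, hn⟩
      have := hok.1
      refine ⟨by omega, fun _ => ⟨has, hbs⟩, fun h => by omega⟩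
    · rintro ⟨n, hn⟩ hb
      by_contra hne
      apply hb
      refine ⟨n + 1, Or.inr ⟨b u, hn, u, Or.inr ⟨rfl, rfl, ?_⟩⟩⟩
      have hbs : ¬ src (a u) := fun h => hb ⟨0, h⟩
      have has : ¬ snk (b u) := fun h => hno _ h ⟨n, hn⟩
      have := hok.1
      refine ⟨by omega, fun h => by omega, fun _ => ⟨has, hbs⟩⟩

theorem froute (a b : U → X) (src snk : X → Prop) (hdis : ∀ x, src x → ¬ snk x) :
    ∃ (arc : U → Prop) (hd tl : U → X) (φ : U → U) (R : X → Prop),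
      (∀ u, (hd u = a u ∧ tl u = b u) ∨ (hd u = b u ∧ tl u = a u)) ∧
      (∀ u, arc u → ¬ src (hd u) ∧ ¬ snk (tl u)) ∧
      (∀ u, arc u → ¬ snk (hd u) → arc (φ u) ∧ tl (φ u) = hd u) ∧
      (∀ u w, arc u → ¬ snk (hd u) → arc w → ¬ snk (hd w) → φ u = φ w → u = w) ∧
      (∀ w, arc w → ¬ src (tl w) → ∃ u, arc u ∧ ¬ snk (hd u) ∧ φ u = w) ∧
      (∀ x, src x → R x) ∧ (∀ x, snk x → ¬ R x) ∧
      (Finset.univ.filter fun u => arc u ∧ snk (hd u)).card =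
        (Finset.univ.filter fun u => ¬ (R (a u) ↔ R (b u))).card := by
  obtain ⟨f, hok, hcons, R, hRs, hRt, hR⟩ := fmaxflow a b src snk hdis
  set arc : U → Prop := fun u => f u ≠ 0 with harc
  set hd : U → X := fun u => if f u = 1 then b u else a u with hhd
  set tl : U → X := fun u => if f u = 1 then a u else b u with htl
  have hcases : ∀ u, f u = 0 ∨ f u = 1 ∨ f u = -1 := fun u => by
    have := (hok u).1; omega
  have hst : ∀ u, arc u → ¬ src (hd u) ∧ ¬ snk (tl u) := by
    intro u hu
    rcases hcases u with h | h | h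
    · exact absurd h hu
    · have := (hok u).2.1 h
      simp [hhd, htl, h, this]
    · have := (hok u).2.2 h
      simp [hhd, htl, h, this]
  have hdivc : ∀ x, fdiv a b f x = ((Finset.univ.filter fun u => arc u ∧ hd u = x).card : ℤ) -
      (Finset.univ.filter fun u => arc u ∧ tl u = x).card := by
    intro x
    rw [Finset.card_filter, Finset.card_filter]
    push_cast
    rw [← Finset.sum_sub_distrib]
    apply Finset.sum_congr rfl
    intro u _
    rcases hcases u with h | h | h
    · simp [harc, h]
    · simp [harc, hhd, htl, h]
    · simp [harc, hhd, htl, h]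
  have hcard : ∀ x, ¬ src x → ¬ snk x →
      Nonempty ({u // arc u ∧ hd u = x} ≃ {u // arc u ∧ tl u = x}) := by
    intro x h1 h2
    have := hdivc x
    rw [hcons x h1 h2] at this
    rw [← Fintype.card_eq, Fintype.card_subtype, Fintype.card_subtype]
    omega
  let ε' : ∀ x, ¬ src x → ¬ snk x → ({u // arc u ∧ hd u = x} ≃ {u // arc u ∧ tl u = x}) :=
    fun x h1 h2 => (hcard x h1 h2).some
  let φ : U → U := fun u => if h : arc u ∧ ¬ snk (hd u) then
    (ε' (hd u) (hst u h.1).1 h.2 ⟨u, h.1, rfl⟩).1 else u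
  have hφ : ∀ u x (h1 : arc u) (h2 : ¬ snk x) (h3 : ¬ src x) (h4 : hd u = x),
      φ u = (ε' x h3 h2 ⟨u, h1, h4⟩).1 := by
    intro u x h1 h2 h3 h4
    subst h4
    simp only [φ]
    rw [dif_pos ⟨h1, h2⟩]
  have hφt : ∀ u, arc u → ¬ snk (hd u) → arc (φ u) ∧ tl (φ u) = hd u := by
    intro u h1 h2
    rw [hφ u (hd u) h1 h2 (hst u h1).1 rfl]
    exact (ε' (hd u) (hst u h1).1 h2 ⟨u, h1, rfl⟩).2
  refine ⟨arc, hd, tl, φ, R, ?_, hst, hφt, ?_, ?_, hRs, hRt, ?_⟩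
  · intro u
    by_cases h : f u = 1 <;> simp [hhd, htl, h]
  · intro u w u1 u2 w1 w2 he
    have e1 := (hφt u u1 u2).2
    have e2 := (hφt w w1 w2).2
    have e3 : hd w = hd u := by rw [← e1, ← e2, he]
    rw [hφ u (hd u) u1 u2 (hst u u1).1 rfl, hφ w (hd u) w1 u2 (hst u u1).1 e3] at he
    have := (ε' (hd u) (hst u u1).1 u2).injective (Subtype.ext he)
    exact congrArg Subtype.val this
  · intro w w1 w2
    have w3 := (hst w w1).2
    obtain ⟨⟨u, u1, u2⟩, hu⟩ := (ε' (tl w) w2 w3).surjective ⟨w, w1, rfl⟩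
    refine ⟨u, u1, by rw [u2]; exact w3, ?_⟩
    rw [hφ u (tl w) u1 w3 w2 u2, hu]
  · have key : ∑ x with ¬ R x, fdiv a b f x =
        ((Finset.univ.filter fun u => ¬ (R (a u) ↔ R (b u))).card : ℤ) := by
      unfold fdiv
      rw [Finset.sum_comm, Finset.card_filter]
      push_cast
      apply Finset.sum_congr rfl
      intro u _
      rw [← Finset.mul_sum, Finset.sum_sub_distrib, Finset.sum_ite_eq, Finset.sum_ite_eq]
      simp only [Finset.mem_filter, Finset.mem_univ, true_and]
      by_cases h1 : R (a u) <;> by_cases h2 : R (b u)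
      · simp [h1, h2]
      · simp [h1, h2, (hR u).1 h1 h2]
      · simp [h1, h2, (hR u).2 h2 h1]
      · simp [h1, h2]
    have key2 : ∑ x with ¬ R x, fdiv a b f x =
        ((Finset.univ.filter fun u => arc u ∧ snk (hd u)).card : ℤ) := by
      have : ∑ x with ¬ R x, fdiv a b f x = ∑ x with snk x, fdiv a b f x := by
        symm
        apply Finset.sum_subset
        · intro x hx
          simp only [Finset.mem_filter, Finset.mem_univ, true_and] at hx ⊢
          exact hRt x hx
        · intro x hx hx2
          simp only [Finset.mem_filter, Finset.mem_univ, true_and] at hx hx2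
          exact hcons x (fun h => hx (hRs x h)) hx2
      rw [this]
      have : ∀ x ∈ Finset.univ.filter snk, fdiv a b f x =
          ∑ u, if arc u ∧ hd u = x then (1:ℤ) else 0 := by
        intro x hx
        simp only [Finset.mem_filter, Finset.mem_univ, true_and] at hx
        rw [hdivc, Finset.card_filter, Finset.filter_false_of_mem]
        · push_cast; simp
        · rintro u _ ⟨h1, rfl⟩
          exact (hst u h1).2 hx
      rw [Finset.sum_congr rfl this, Finset.sum_comm, Finset.card_filter]
      push_cast
      apply Finset.sum_congr rfl
      intro u _
      by_cases h : arc u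
      · simp only [h, true_and]
        rw [Finset.sum_ite_eq]; simp
      · simp [h]
    rw [key2] at key
    have key3 := Int.ofNat_inj.1 key
    convert key3

theorem fextend {D : Type} (z : D) (arc isT isS : U → Prop) (φ : U → U)
    (h1 : ∀ u, arc u → ¬ isT u → arc (φ u) ∧ ¬ isS (φ u))
    (h2 : ∀ u w, arc u → ¬ isT u → arc w → ¬ isT w → φ u = φ w → u = w)
    (x : {u // arc u ∧ isS u} → D) :
    ∃ W : U → D, (∀ u, arc u → ¬ isT u → W (φ u) = W u) ∧ ∀ s, W s.1 = x s := by
  let r : U → U → Prop := fun u v => arc u ∧ ¬ isT u ∧ φ u = v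
  let Q : U → {u // arc u ∧ isS u} → Prop := fun u s => Relation.ReflTransGen r s.1 u
  have hQ : ∀ u, arc u → ¬ isT u → Q (φ u) = Q u := by
    intro u u1 u2
    funext s
    apply propext
    constructor
    · intro h
      rcases Relation.ReflTransGen.cases_tail h with h | ⟨w, hw, w1, w2, w3⟩
      · exact absurd (h ▸ s.2.2) (h1 u u1 u2).2
      · rw [← h2 w u w1 w2 u1 u2 w3]; exact hw
    · intro h
      exact h.tail ⟨u1, u2, rfl⟩
  let g : ({u // arc u ∧ isS u} → Prop) → D := fun P => if h : ∃ s, P s then x h.choose else z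
  refine ⟨fun u => g (Q u), fun u u1 u2 => by simp only [hQ u u1 u2], ?_⟩
  intro s
  have hs : ∀ t, Q s.1 t → t = s := by
    intro t ht
    rcases Relation.ReflTransGen.cases_tail ht with h | ⟨w, hw, w1, w2, w3⟩
    · exact Subtype.ext h.symm
    · exact absurd (w3 ▸ s.2.2) (h1 w w1 w2).2
  have hex : ∃ t, Q s.1 t := ⟨s, Relation.ReflTransGen.refl⟩
  simp only [g]
  rw [dif_pos hex, hs _ hex.choose_spec]

theorem fagree_aux (arc isT isS : U → Prop) (φ : U → U)
    (h1 : ∀ u, arc u → ¬ isT u → arc (φ u) ∧ ¬ isS (φ u))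
    (h2 : ∀ u w, arc u → ¬ isT u → arc w → ¬ isT w → φ u = φ w → u = w)
    (h3 : ∀ w, arc w → ¬ isS w → ∃ u, arc u ∧ ¬ isT u ∧ φ u = w)
    (P : U → Prop) (hP : ∀ u, arc u → ¬ isT u → (P (φ u) ↔ P u)) :
    (Finset.univ.filter fun u => (arc u ∧ P u) ∧ isT u).card =
      (Finset.univ.filter fun u => (arc u ∧ P u) ∧ isS u).card := by
  have e : (Finset.univ.filter fun u => (arc u ∧ P u) ∧ ¬ isT u).card =
      (Finset.univ.filter fun u => (arc u ∧ P u) ∧ ¬ isS u).card := by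
    apply Finset.card_bij (fun u _ => φ u)
    · intro u hu
      simp only [Finset.mem_filter, Finset.mem_univ, true_and] at hu ⊢
      exact ⟨⟨(h1 u hu.1.1 hu.2).1, (hP u hu.1.1 hu.2).2 hu.1.2⟩, (h1 u hu.1.1 hu.2).2⟩
    · intro u hu w hw he
      simp only [Finset.mem_filter, Finset.mem_univ, true_and] at hu hw
      exact h2 u w hu.1.1 hu.2 hw.1.1 hw.2 he
    · intro w hw
      simp only [Finset.mem_filter, Finset.mem_univ, true_and] at hw
      obtain ⟨u, u1, u2, rfl⟩ := h3 w hw.1.1 hw.2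
      refine ⟨u, ?_, rfl⟩
      simp only [Finset.mem_filter, Finset.mem_univ, true_and]
      exact ⟨⟨u1, (hP u u1 u2).1 hw.1.2⟩, u2⟩
  have a1 := Finset.card_filter_add_card_filter_not (s := Finset.univ.filter fun u => arc u ∧ P u) isT
  have a2 := Finset.card_filter_add_card_filter_not (s := Finset.univ.filter fun u => arc u ∧ P u) isS
  simp only [Finset.filter_filter] at a1 a2
  omega

theorem fagree {D : Type} (arc isT isS : U → Prop) (φ : U → U)
    (h1 : ∀ u, arc u → ¬ isT u → arc (φ u) ∧ ¬ isS (φ u))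
    (h2 : ∀ u w, arc u → ¬ isT u → arc w → ¬ isT w → φ u = φ w → u = w)
    (h3 : ∀ w, arc w → ¬ isS w → ∃ u, arc u ∧ ¬ isT u ∧ φ u = w)
    (W W' : U → D) (hW : ∀ u, arc u → ¬ isT u → W (φ u) = W u)
    (hW' : ∀ u, arc u → ¬ isT u → W' (φ u) = W' u)
    (hT : ∀ u, arc u → isT u → W u = W' u) : ∀ u, arc u → isS u → W u = W' u := by
  have c1 := fagree_aux arc isT isS φ h1 h2 h3 (fun u => W u = W' u)
    (fun u u1 u2 => by rw [hW u u1 u2, hW' u u1 u2])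
  have c2 := fagree_aux arc isT isS φ h1 h2 h3 (fun u => W u = W u) (fun u u1 u2 => by simp)
  have c3 : (Finset.univ.filter fun u => (arc u ∧ W u = W' u) ∧ isT u) =
      (Finset.univ.filter fun u => (arc u ∧ W u = W u) ∧ isT u) := by
    apply Finset.filter_congr
    intro u _
    constructor
    · rintro ⟨⟨h, _⟩, h'⟩; exact ⟨⟨h, rfl⟩, h'⟩
    · rintro ⟨⟨h, _⟩, h'⟩; exact ⟨⟨h, hT u h h'⟩, h'⟩
  have c4 : (Finset.univ.filter fun u => (arc u ∧ W u = W' u) ∧ isS u) =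
      (Finset.univ.filter fun u => (arc u ∧ W u = W u) ∧ isS u) := by
    apply Finset.eq_of_subset_of_card_le
    · intro u hu
      simp only [Finset.mem_filter, Finset.mem_univ, true_and] at hu ⊢
      exact ⟨⟨hu.1.1, trivial⟩, hu.2⟩
    · rw [← c1, ← c2, c3]
  intro u u1 u2
  have : u ∈ (Finset.univ.filter fun u => (arc u ∧ W u = W' u) ∧ isS u) := by
    rw [c4]; simp [u1, u2]
  simp only [Finset.mem_filter, Finset.mem_univ, true_and] at this
  exact this.1.2

end Flow

namespace TN
variable (N : TN)

theorem inEdge_spec (u : N.S) : ∃ i, N.ends (N.inEdge u) i = Sum.inr (Sum.inl u) :=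
  ⟨(N.openS u).choose.2, (N.openS u).choose_spec.1⟩

theorem outEdge_spec (u : N.T) : ∃ i, N.ends (N.outEdge u) i = Sum.inr (Sum.inr u) :=
  ⟨(N.openT u).choose.2, (N.openT u).choose_spec.1⟩

theorem inEdge_eq (u : N.S) (e : N.E) (i : Fin 2) (h : N.ends e i = Sum.inr (Sum.inl u)) :
    N.inEdge u = e :=
  (congrArg Prod.fst ((N.openS u).choose_spec.2 (e, i) h)).symm

theorem outEdge_eq (u : N.T) (e : N.E) (i : Fin 2) (h : N.ends e i = Sum.inr (Sum.inr u)) :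
    N.outEdge u = e :=
  (congrArg Prod.fst ((N.openT u).choose_spec.2 (e, i) h)).symm

theorem rank_le_cut (𝒯 : N.Assignment) (C : Finset N.E) (hC : N.IsCutSet C) :
    (N.β 𝒯).rank ≤ ∏ e ∈ C, N.c e := by
  obtain ⟨f, hS, hT, hc⟩ := hC
  let Cfg := (e : N.E) → Fin (N.c e)
  let Mid := (e : {e // e ∈ C}) → Fin (N.c e.1)
  let z : Cfg := fun e => ⟨0, N.c_pos e⟩
  let eF : N.E → Prop := fun e => ∀ i, f (N.ends e i) = false
  let eT : N.E → Prop := fun e => ∀ i, f (N.ends e i) = true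
  have hFT : ∀ e, eF e → ¬ eT e := fun e h1 h2 => by
    have := h1 0; rw [h2 0] at this; cases this
  have hCF : ∀ e, e ∈ C → ¬ eF e := fun e h1 h2 => by
    rw [hc] at h1; exact h1 (by rw [h2 0, h2 1])
  have hCT : ∀ e, e ∈ C → ¬ eT e := fun e h1 h2 => by
    rw [hc] at h1; exact h1 (by rw [h2 0, h2 1])
  have hall : ∀ e, ¬ eF e → ¬ eT e → e ∈ C := fun e h1 h2 => by
    rw [hc]
    intro h
    cases h0 : f (N.ends e 0)
    · apply h1; intro i; fin_cases i
      · exact h0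
      · exact h ▸ h0
    · apply h2; intro i; fin_cases i
      · exact h0
      · exact h ▸ h0
  have hin : ∀ u, ¬ eT (N.inEdge u) := fun u h => by
    obtain ⟨i, hi⟩ := N.inEdge_spec u
    have := h i; rw [hi, hS] at this; cases this
  have hout : ∀ u, ¬ eF (N.outEdge u) := fun u h => by
    obtain ⟨i, hi⟩ := N.outEdge_spec u
    have := h i; rw [hi, hT] at this; cases this
  let cA : N.OutIdx → Mid → Cfg → Prop := fun iT w W =>
    (∀ e : {e // e ∈ C}, W e.1 = w e) ∧ (∀ e, eF e → W e = z e) ∧ (∀ u, W (N.outEdge u) = iT u)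
  let cB : N.InIdx → Mid → Cfg → Prop := fun iS w W =>
    (∀ e : {e // e ∈ C}, W e.1 = w e) ∧ (∀ e, eT e → W e = z e) ∧ (∀ u, W (N.inEdge u) = iS u)
  let pT : Cfg → ℂ := fun W => ∏ v with f (Sum.inl v) = true, 𝒯 v (fun p => W p.1.1)
  let pF : Cfg → ℂ := fun W => ∏ v with ¬ f (Sum.inl v) = true, 𝒯 v (fun p => W p.1.1)
  let A : Matrix N.OutIdx Mid ℂ := fun iT w => ∑ W : Cfg, if cA iT w W then pT W else 0
  let B : Matrix Mid N.InIdx ℂ := fun w iS => ∑ W : Cfg, if cB iS w W then pF W else 0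
  have hpT : ∀ W W' : Cfg, (∀ e, ¬ eF e → W e = W' e) → pT W = pT W' := by
    intro W W' h
    apply Finset.prod_congr rfl
    intro v hv
    congr 1
    funext p
    apply h
    intro hF
    have := hF p.1.2
    rw [p.2, (Finset.mem_filter.1 hv).2] at this
    cases this
  have hpF : ∀ W W' : Cfg, (∀ e, ¬ eT e → W e = W' e) → pF W = pF W' := by
    intro W W' h
    apply Finset.prod_congr rfl
    intro v hv
    congr 1
    funext p
    apply h
    intro hF
    have := hF p.1.2
    rw [p.2] at this
    exact (Finset.mem_filter.1 hv).2 this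
  have hAB : N.β 𝒯 = A * B := by
    funext iT iS
    rw [Matrix.mul_apply]
    simp only [A, B, Finset.sum_mul_sum]
    unfold β
    have : ∀ w, (∑ i : Cfg, ∑ j : Cfg, (if cA iT w i then pT i else 0) * (if cB iS w j then pF j else 0))
        = ∑ q : Cfg × Cfg, if cA iT w q.1 ∧ cB iS w q.2 then pT q.1 * pF q.2 else 0 := by
      intro w
      rw [Fintype.sum_prod_type]
      refine Finset.sum_congr rfl fun i _ => Finset.sum_congr rfl fun j _ => ?_
      by_cases h1 : cA iT w i <;> by_cases h2 : cB iS w j <;> simp [h1, h2]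
    simp only [this]
    rw [← Fintype.sum_prod_type' (f := fun (w : Mid) (q : Cfg × Cfg) =>
      if cA iT w q.1 ∧ cB iS w q.2 then pT q.1 * pF q.2 else 0)]
    rw [← Finset.sum_filter, ← Finset.sum_filter]
    refine Finset.sum_nbij'
      (fun W : Cfg => ((fun e => W e.1 : Mid), ((fun e => if eF e then z e else W e : Cfg),
        (fun e => if eT e then z e else W e : Cfg))))
      (fun q => (fun e => if eF e then q.2.2 e else q.2.1 e : Cfg)) ?_ ?_ ?_ ?_ ?_
    · intro W hW
      simp only [Finset.mem_filter, Finset.mem_univ, true_and] at hW ⊢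
      refine ⟨⟨fun e => ?_, fun e he => ?_, fun u => ?_⟩, ⟨fun e => ?_, fun e he => ?_, fun u => ?_⟩⟩
      · simp only [if_neg (hCF e.1 e.2)]
      · simp only [if_pos he]
      · simp only [if_neg (hout u)]; exact hW.2 u
      · simp only [if_neg (hCT e.1 e.2)]
      · simp only [if_pos he]
      · simp only [if_neg (hin u)]; exact hW.1 u
    · rintro ⟨w, W1, W2⟩ hq
      simp only [Finset.mem_filter, Finset.mem_univ, true_and] at hq ⊢
      obtain ⟨⟨a1, a2, a3⟩, ⟨b1, b2, b3⟩⟩ := hq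
      constructor
      · intro u
        by_cases h : eF (N.inEdge u)
        · simp only [if_pos h]; exact b3 u
        · simp only [if_neg h]
          have hC := hall _ h (hin u)
          rw [← b3 u]
          exact (a1 ⟨_, hC⟩).trans (b1 ⟨_, hC⟩).symm
      · intro u
        simp only [if_neg (hout u)]; exact a3 u
    · intro W hW
      funext e
      by_cases h : eF e
      · simp only [if_pos h, if_neg (hFT e h)]
      · simp only [if_neg h]
    · rintro ⟨w, W1, W2⟩ hq
      simp only [Finset.mem_filter, Finset.mem_univ, true_and] at hq
      obtain ⟨⟨a1, a2, a3⟩, ⟨b1, b2, b3⟩⟩ := hq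
      refine Prod.ext ?_ (Prod.ext ?_ ?_)
      · funext e
        simp only [if_neg (hCF e.1 e.2)]; exact a1 e
      · funext e
        by_cases h : eF e
        · simp only [if_pos h]; exact (a2 e h).symm
        · simp only [if_neg h]
      · funext e
        by_cases h : eT e
        · simp only [if_pos h]; exact (b2 e h).symm
        · simp only [if_neg h]
          by_cases h' : eF e
          · simp only [if_pos h']
          · simp only [if_neg h']
            have hC := hall _ h' h
            exact (a1 ⟨_, hC⟩).trans (b1 ⟨_, hC⟩).symm
    · intro W hW
      have e1 := hpT (fun e => if eF e then z e else W e) W (fun e he => if_neg he)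
      have e2 := hpF (fun e => if eT e then z e else W e) W (fun e he => if_neg he)
      refine Eq.trans ?_ (congrArg₂ (fun s t : ℂ => s * t) e1 e2).symm
      exact (Finset.prod_filter_mul_prod_filter_not Finset.univ _ _).symm
  rw [hAB]
  calc (A * B).rank ≤ A.rank := Matrix.rank_mul_le_left A B
    _ ≤ Fintype.card Mid := Matrix.rank_le_card_width A
    _ = ∏ e ∈ C, N.c e := by
      rw [← Finset.prod_coe_sort]
      simp [Mid, Fintype.card_pi]

theorem exists_cut_rank (d : ℕ) (hd : 0 < d) (h : ∀ e : N.E, ∃ m : ℕ, N.c e = d ^ m) :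
    ∃ (𝒯 : N.Assignment) (C : Finset N.E), N.IsCutSet C ∧
      ∏ e ∈ C, N.c e ≤ (N.β 𝒯).rank := by
  choose m hm using h
  let U := Σ e : N.E, Fin (m e)
  let src : N.V ⊕ N.S ⊕ N.T → Prop := fun x => ∃ s, x = Sum.inr (Sum.inl s)
  let snk : N.V ⊕ N.S ⊕ N.T → Prop := fun x => ∃ s, x = Sum.inr (Sum.inr s)
  obtain ⟨arc, hd', tl, φ, R, r1, r2, r3, r4, r5, r6, r7, r8⟩ :=
    froute (U := U) (fun u => N.ends u.1 0) (fun u => N.ends u.1 1) src snk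
      (by rintro x ⟨s, rfl⟩ ⟨t, h⟩; simp at h)
  let isT : U → Prop := fun u => snk (hd' u)
  let isS : U → Prop := fun u => src (tl u)
  have q1 : ∀ u, arc u → ¬ isT u → arc (φ u) ∧ ¬ isS (φ u) := by
    intro u u1 u2
    refine ⟨(r3 u u1 u2).1, ?_⟩
    simp only [isS]
    rw [(r3 u u1 u2).2]
    exact (r2 u u1).1
  have hdend : ∀ u, ∃ i, N.ends u.1 i = hd' u := by
    intro u
    rcases r1 u with h | h
    · exact ⟨0, h.1.symm⟩
    · exact ⟨1, h.1.symm⟩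
  have tlend : ∀ u, ∃ i, N.ends u.1 i = tl u := by
    intro u
    rcases r1 u with h | h
    · exact ⟨1, h.2.symm⟩
    · exact ⟨0, h.2.symm⟩
  let Cfg := (e : N.E) → Fin (N.c e)
  let dg : ∀ e, Fin (N.c e) ≃ (Fin (m e) → Fin d) := fun e =>
    (finCongr (hm e)).trans finFunctionFinEquiv.symm
  let D : Cfg → U → Fin d := fun W u => dg u.1 (W u.1) u.2
  have Dsurj : ∀ w : U → Fin d, ∃ W, D W = w := by
    intro w
    refine ⟨fun e => (dg e).symm fun k => w ⟨e, k⟩, ?_⟩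
    funext ⟨e, k⟩
    simp [D]
  let good : N.V → Cfg → Prop := fun v W =>
    ∀ u, arc u → hd' u = Sum.inl v → D W (φ u) = D W u
  have hgood : ∀ v (W W' : Cfg), (∀ p : N.Legs v, W p.1.1 = W' p.1.1) → good v W → good v W' := by
    intro v W W' hWW hg u u1 u2
    have hns : ¬ snk (hd' u) := by rw [u2]; rintro ⟨s, hs⟩; simp at hs
    have e1 : W u.1 = W' u.1 := by
      obtain ⟨i, hi⟩ := hdend u
      exact hWW ⟨(u.1, i), hi.trans u2⟩
    have e2 : W (φ u).1 = W' (φ u).1 := by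
      obtain ⟨i, hi⟩ := tlend (φ u)
      exact hWW ⟨((φ u).1, i), hi.trans ((r3 u u1 hns).2.trans u2)⟩
    have := hg u u1 u2
    simp only [D] at this ⊢
    rw [← e1, ← e2]; exact this
  let 𝒯 : N.Assignment := fun v ω =>
    if ∃ W : Cfg, (∀ p, W p.1.1 = ω p) ∧ good v W then 1 else 0
  have h𝒯 : ∀ v (W : Cfg), 𝒯 v (fun p => W p.1.1) = if good v W then 1 else 0 := by
    intro v W
    simp only [𝒯]
    congr 1
    apply propext
    constructor
    · rintro ⟨W', h1, h2⟩; exact hgood v W' W h1 h2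
    · intro h; exact ⟨W, fun _ => rfl, h⟩
  have hβ : ∀ iT iS, N.β 𝒯 iT iS = ((Finset.univ.filter fun W : Cfg =>
      ((∀ u : N.S, W (N.inEdge u) = iS u) ∧ (∀ u : N.T, W (N.outEdge u) = iT u)) ∧
        ∀ v, good v W).card : ℂ) := by
    intro iT iS
    unfold β
    rw [Finset.card_filter]
    push_cast
    apply Finset.sum_congr rfl
    intro W _
    by_cases hc : (∀ u : N.S, W (N.inEdge u) = iS u) ∧ (∀ u : N.T, W (N.outEdge u) = iT u)
    · rw [if_pos hc]
      simp only [h𝒯]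
      rw [Finset.prod_ite_zero]
      simp [hc]
    · rw [if_neg hc, if_neg (fun h => hc h.1)]
  have hβ2 : ∀ iT iS, N.β 𝒯 iT iS ≠ 0 ↔ ∃ W : Cfg,
      ((∀ u : N.S, W (N.inEdge u) = iS u) ∧ (∀ u : N.T, W (N.outEdge u) = iT u)) ∧
        ∀ v, good v W := by
    intro iT iS
    rw [hβ, Nat.cast_ne_zero, Finset.card_ne_zero, Finset.filter_nonempty_iff]
    simp only [Finset.mem_univ, true_and]
  have goodinv : ∀ W : Cfg, (∀ v, good v W) ↔ ∀ u, arc u → ¬ isT u → D W (φ u) = D W u := by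
    intro W
    constructor
    · intro hg u u1 u2
      rcases hx : hd' u with v | s | t
      · exact hg v u u1 hx
      · exact absurd ⟨s, hx⟩ (r2 u u1).1
      · exact absurd ⟨t, hx⟩ u2
    · intro hg v u u1 u2
      exact hg u u1 (by simp only [isT]; rw [u2]; rintro ⟨s, hs⟩; simp at hs)
  let K := {u // arc u ∧ isS u} → Fin d
  have hex : ∀ x : K, ∃ W : Cfg, (∀ v, good v W) ∧ ∀ s, D W s.1 = x s := by
    intro x
    obtain ⟨w, w1, w2⟩ := fextend (⟨0, hd⟩ : Fin d) arc isT isS φ q1 r4 x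
    obtain ⟨W, rfl⟩ := Dsurj w
    exact ⟨W, (goodinv W).2 w1, w2⟩
  choose WW hWW1 hWW2 using hex
  let g : K → N.OutIdx := fun x u => WW x (N.outEdge u)
  let hh : K → N.InIdx := fun x u => WW x (N.inEdge u)
  have hdiag : (N.β 𝒯).submatrix g hh = Matrix.diagonal (fun x => N.β 𝒯 (g x) (hh x)) := by
    funext y x
    by_cases hxy : y = x
    · subst hxy; simp
    · rw [Matrix.diagonal_apply_ne _ hxy, Matrix.submatrix_apply]
      by_contra hnz
      · obtain ⟨W, ⟨hi, ho⟩, hg⟩ := (hβ2 _ _).1 hnz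
        apply hxy
        have hS : ∀ u, arc u → isS u → D W u = D (WW x) u := by
          rintro u u1 ⟨s, hs⟩
          obtain ⟨i, hi'⟩ := tlend u
          have he := N.inEdge_eq s u.1 i (hi'.trans hs)
          have := hi s
          simp only [hh] at this
          rw [he] at this
          simp only [D]; rw [this]
        have hT : ∀ u, arc u → isT u → D W u = D (WW y) u := by
          rintro u u1 ⟨s, hs⟩
          obtain ⟨i, hi'⟩ := hdend u
          have he := N.outEdge_eq s u.1 i (hi'.trans hs)
          have := ho s
          simp only [g] at this
          rw [he] at this
          simp only [D]; rw [this]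
        have hS2 := fagree arc isT isS φ q1 r4 r5 (D W) (D (WW y)) ((goodinv W).1 hg)
          ((goodinv _).1 (hWW1 y)) hT
        funext s
        rw [← hWW2 y s, ← hWW2 x s, ← hS s.1 s.2.1 s.2.2, ← hS2 s.1 s.2.1 s.2.2]
  have hne : ∀ x, N.β 𝒯 (g x) (hh x) ≠ 0 := by
    intro x
    exact (hβ2 _ _).2 ⟨WW x, ⟨fun _ => rfl, fun _ => rfl⟩, hWW1 x⟩
  have hrank : Fintype.card K ≤ (N.β 𝒯).rank := by
    have h1 := Matrix.rank_submatrix_le (N.β 𝒯) g hh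
    rw [hdiag, Matrix.rank_diagonal] at h1
    refine le_trans (le_of_eq ?_) h1
    exact (Fintype.card_congr (Equiv.subtypeUnivEquiv hne)).symm
  refine ⟨𝒯, Finset.univ.filter fun e => ¬ (R (N.ends e 0) ↔ R (N.ends e 1)), ?_, ?_⟩
  · refine ⟨fun x => decide (¬ R x), ?_, ?_, ?_⟩
    · intro u; simpa using r6 _ ⟨u, rfl⟩
    · intro u; simpa using r7 _ ⟨u, rfl⟩
    · intro e
      by_cases h0 : R (N.ends e 0) <;> by_cases h1 : R (N.ends e 1) <;> simp [h0, h1]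
  · refine le_trans (le_of_eq ?_) hrank
    have hcS : Fintype.card {u // arc u ∧ isS u} =
        (Finset.univ.filter fun u => arc u ∧ snk (hd' u)).card := by
      rw [Fintype.card_subtype]
      have := fagree_aux arc isT isS φ q1 r4 r5 (fun _ => True) (fun _ _ _ => Iff.rfl)
      simp only [and_true] at this
      exact this.symm
    have : Fintype.card K = d ^ Fintype.card {u // arc u ∧ isS u} := by
      simp [K]
    have hc8 : Fintype.card {u // arc u ∧ isS u} = (Finset.univ.filter fun u : U =>
        ¬ (R (N.ends u.1 0) ↔ R (N.ends u.1 1))).card := by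
      rw [hcS]; convert r8
    rw [this, hc8, Finset.prod_congr rfl (fun e _ => hm e), Finset.prod_pow_eq_pow_sum]
    congr 1
    rw [Finset.card_filter, Fintype.sum_sigma, Finset.sum_filter]
    apply Finset.sum_congr rfl
    intro e _
    by_cases hRe : R (N.ends e 0) ↔ R (N.ends e 1) <;> simp [hRe]

end TN

/-- Quantum max-flow/min-cut theorem: if every edge capacity is a power of a fixed
integer `d > 0`, then the quantum max-flow equals the quantum min-cut. -/
theorem stmt_1 (N : TN) (d : ℕ) (hd : 0 < d)
    (h : ∀ e : N.E, ∃ m : ℕ, N.c e = d ^ m) :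
    N.QMF = N.QMC := by
  obtain ⟨𝒯, C, hC, hr⟩ := N.exists_cut_rank d hd h
  apply le_antisymm
  · unfold TN.QMF TN.QMC
    refine csSup_le (Set.nonempty_of_mem (x := (N.β 𝒯).rank) ⟨𝒯, rfl⟩) ?_
    rintro r ⟨𝒯', rfl⟩
    refine le_csInf (Set.nonempty_of_mem (x := ∏ e ∈ C, N.c e) ⟨C, hC, rfl⟩) ?_
    rintro k ⟨C', hC', rfl⟩
    exact N.rank_le_cut 𝒯' C' hC'
  · have h1 : N.QMC ≤ ∏ e ∈ C, N.c e := Nat.sInf_le ⟨C, hC, rfl⟩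
    have h2 : (N.β 𝒯).rank ≤ N.QMF := by
      apply le_csSup
      · refine ⟨∏ e ∈ C, N.c e, ?_⟩
        rintro r ⟨𝒯', rfl⟩
        exact N.rank_le_cut 𝒯' C hC
      · exact ⟨𝒯, rfl⟩
    omega
end

section
/- If a tensor network (G,c) has all edge capacities at least d_min and the underlying classical min-cut (counting each edge with capacity 1) has cardinality C, then the quantum max-flow satisfies QMF(G,c) ≥ d_min^C. -/
open scoped Classical

theorem dirMenger {X E : Type} [Fintype X] [DecidableEq X] [DecidableEq E] (s t : X) (hst : s ≠ t) :
    ∀ (n : ℕ) (F : Finset E) (k : ℕ) (tl hd : E → X), F.card = n →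
    (∀ W : Finset X, s ∈ W → t ∉ W → k ≤ (F.filter (fun e => tl e ∈ W ∧ hd e ∉ W)).card) →
    ∃ l : E → ℕ, ∀ i < k, ∀ W : Finset X, s ∈ W → t ∉ W →
      ∃ e ∈ F, l e = i ∧ tl e ∈ W ∧ hd e ∉ W := by
  intro n
  induction n with
  | zero =>
    intro F k tl hd hF h
    refine ⟨fun _ => 0, fun i hi => ?_⟩
    have := h {s} (by simp) (by simpa using hst.symm)
    rw [Finset.card_eq_zero] at hF
    subst hF
    simp at this
    omega
  | succ n ih =>
    intro F k tl hd hF h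
    rcases Nat.eq_zero_or_pos k with hk | hk
    · exact ⟨fun _ => 0, fun i hi => by omega⟩
    have h1 := h {s} (by simp) (by simpa using hst.symm)
    obtain ⟨e, he⟩ := Finset.card_pos.1 (lt_of_lt_of_le hk h1)
    simp only [Finset.mem_filter, Finset.mem_singleton] at he
    obtain ⟨heF, hes, hex⟩ := he
    have hcard : (F.erase e).card = n := by rw [Finset.card_erase_of_mem heF, hF]; rfl
    by_cases hxt : hd e = t
    · -- direct edge
      obtain ⟨l, hl⟩ := ih (F.erase e) (k-1) tl hd hcard (by
        intro W hs ht
        have h2 := h W hs ht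
        rw [Finset.filter_erase]
        have := Finset.pred_card_le_card_erase (s := F.filter (fun e => tl e ∈ W ∧ hd e ∉ W)) (a := e)
        omega)
      refine ⟨Function.update l e (k-1), fun i hi W hs ht => ?_⟩
      by_cases hik : i = k - 1
      · exact ⟨e, heF, by simp [hik], by rw [hes]; exact hs, by rw [hxt]; exact ht⟩
      · obtain ⟨g, hg, hgl, hgW⟩ := hl i (by omega) W hs ht
        have := Finset.mem_erase.1 hg
        exact ⟨g, this.2, by rw [Function.update_of_ne this.1]; exact hgl, hgW⟩
    by_cases htight : ∃ W : Finset X, s ∈ W ∧ t ∉ W ∧ hd e ∉ W ∧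
        (F.filter (fun e => tl e ∈ W ∧ hd e ∉ W)).card = k
    · let P : Finset (Finset X) := Finset.univ.filter (fun W => s ∈ W ∧ t ∉ W ∧ hd e ∉ W ∧
        (F.filter (fun e => tl e ∈ W ∧ hd e ∉ W)).card = k)
      have hPne : P.Nonempty := by
        obtain ⟨W, hW⟩ := htight
        exact ⟨W, by simp [P, hW]⟩
      obtain ⟨W, hWP, hWmax⟩ := Finset.exists_max_image P Finset.card hPne
      have hWP' := hWP
      simp only [P, Finset.mem_filter, Finset.mem_univ, true_and] at hWP'
      obtain ⟨hsW, htW, hxW, hdW⟩ := hWP'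
      have hins := h (insert (hd e) W) (by simp [hsW]) (by simp [htW, Ne.symm hxt])
      have hf : ∃ f ∈ F, tl f = hd e ∧ hd f ∉ W ∧ hd f ≠ hd e := by
        by_contra hcon
        push Not at hcon
        have hsub : F.filter (fun g => tl g ∈ insert (hd e) W ∧ hd g ∉ insert (hd e) W) ⊆
            (F.filter (fun e => tl e ∈ W ∧ hd e ∉ W)).erase e := by
          intro g hg
          simp only [Finset.mem_filter, Finset.mem_insert, not_or, Finset.mem_erase] at hg ⊢
          obtain ⟨hgF, hg1, hg2, hg3⟩ := hg
          refine ⟨?_, hgF, ?_, hg3⟩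
          · rintro rfl; exact hg2 rfl
          · rcases hg1 with hg1 | hg1
            · exact absurd (hcon g hgF hg1 hg3) hg2
            · exact hg1
        have := Finset.card_le_card hsub
        rw [Finset.card_erase_of_mem (by simp [heF, hes, hsW, hxW])] at this
        omega
      obtain ⟨f, hfF, hft, hfW, hfx⟩ := hf
      have hfe : f ≠ e := by
        rintro rfl
        exact hex (hft.symm.trans hes)
      obtain ⟨l, hl⟩ := ih (F.erase e) k (Function.update tl f s) hd hcard (by
        intro Z hsZ htZ
        have hZ := h Z hsZ htZ
        by_cases hxZ : hd e ∈ Z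
        · refine hZ.trans (Finset.card_le_card ?_)
          intro g hg
          simp only [Finset.mem_filter, Finset.mem_erase] at hg ⊢
          refine ⟨⟨?_, hg.1⟩, ?_, hg.2.2⟩
          · rintro rfl; exact hg.2.2 hxZ
          · by_cases hgf : g = f
            · subst hgf; simpa using hsZ
            · rw [Function.update_of_ne hgf]; exact hg.2.1
        have hsub : (F.filter (fun g => tl g ∈ Z ∧ hd g ∉ Z)).erase e ⊆
            ((F.erase e).filter (fun g => Function.update tl f s g ∈ Z ∧ hd g ∉ Z)).erase f := by
          intro g hg
          simp only [Finset.mem_filter, Finset.mem_erase] at hg ⊢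
          have hgf : g ≠ f := by
            rintro rfl
            rw [hft] at hg
            exact hxZ hg.2.2.1
          rw [Function.update_of_ne hgf]
          exact ⟨hgf, ⟨hg.1, hg.2.1⟩, hg.2.2⟩
        have hc := Finset.card_le_card hsub
        rw [Finset.card_erase_of_mem (by simp [heF, hes, hsZ, hxZ])] at hc
        by_cases hZk : (F.filter (fun g => tl g ∈ Z ∧ hd g ∉ Z)).card = k
        · have hsubm : (F.filter (fun g => tl g ∈ Z ∪ W ∧ hd g ∉ Z ∪ W)).card +
              (F.filter (fun g => tl g ∈ Z ∩ W ∧ hd g ∉ Z ∩ W)).card ≤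
              (F.filter (fun g => tl g ∈ Z ∧ hd g ∉ Z)).card +
              (F.filter (fun g => tl g ∈ W ∧ hd g ∉ W)).card := by
            simp only [Finset.card_filter, ← Finset.sum_add_distrib]
            refine Finset.sum_le_sum fun g _ => ?_
            by_cases a1 : tl g ∈ Z <;> by_cases a2 : tl g ∈ W <;> by_cases a3 : hd g ∈ Z <;>
              by_cases a4 : hd g ∈ W <;> simp [a1, a2, a3, a4]
          have hi := h (Z ∩ W) (by simp [hsZ, hsW]) (by simp [htZ])
          have hu := h (Z ∪ W) (by simp [hsZ]) (by simp [htZ, htW])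
          have hmem : Z ∪ W ∈ P := by
            simp only [P, Finset.mem_filter, Finset.mem_univ, true_and]
            exact ⟨by simp [hsZ], by simp [htZ, htW], by simp [hxZ, hxW], by omega⟩
          have hWe : W = Z ∪ W :=
            Finset.eq_of_subset_of_card_le Finset.subset_union_right (hWmax _ hmem)
          have hfZ : hd f ∉ Z := fun hh => hfW (by rw [hWe]; simp [hh])
          rw [Finset.card_erase_of_mem (by simp [hfe, hfF, hsZ, hfZ])] at hc
          have : 0 < ((F.erase e).filter
              (fun g => Function.update tl f s g ∈ Z ∧ hd g ∉ Z)).card :=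
            Finset.card_pos.2 ⟨f, by simp [hfe, hfF, hsZ, hfZ]⟩
          omega
        · have := Finset.card_erase_le
            (s := (F.erase e).filter (fun g => Function.update tl f s g ∈ Z ∧ hd g ∉ Z)) (a := f)
          omega)
      refine ⟨Function.update l e (l f), fun i hi Z hsZ htZ => ?_⟩
      obtain ⟨g, hg, hgl, hg1, hg2⟩ := hl i hi Z hsZ htZ
      have hg' := Finset.mem_erase.1 hg
      by_cases hgf : g = f
      · subst hgf
        by_cases hxZ : hd e ∈ Z
        · exact ⟨g, hfF, by rw [Function.update_of_ne hfe]; exact hgl, by rw [hft]; exact hxZ, hg2⟩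
        · exact ⟨e, heF, by simp [hgl], by rw [hes]; exact hsZ, hxZ⟩
      · rw [Function.update_of_ne hgf] at hg1
        exact ⟨g, hg'.2, by rw [Function.update_of_ne hg'.1]; exact hgl, hg1, hg2⟩
    · push Not at htight
      obtain ⟨l, hl⟩ := ih (F.erase e) k tl hd hcard (by
        intro W hs ht
        have h2 := h W hs ht
        rw [Finset.filter_erase]
        by_cases hxW : hd e ∈ W
        · rw [Finset.erase_eq_of_notMem (by simp [hxW])]; exact h2
        · have h3 := htight W hs ht hxW
          have := Finset.pred_card_le_card_erase (s := F.filter (fun e => tl e ∈ W ∧ hd e ∉ W)) (a := e)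
          omega)
      refine ⟨l, fun i hi W hs ht => ?_⟩
      obtain ⟨g, hg, hh⟩ := hl i hi W hs ht
      exact ⟨g, (Finset.mem_erase.1 hg).2, hh⟩

theorem mixMenger {X E : Type} [Fintype X] [DecidableEq X] [Fintype E] [DecidableEq E] (s t : X)
    (hst : s ≠ t) (k : ℕ) (D : Finset E) : ∀ (tl hd : E → X),
    (∀ W : Finset X, s ∈ W → t ∉ W → k ≤ (Finset.univ.filter
      (fun e => (tl e ∈ W ∧ hd e ∉ W) ∨ (e ∈ D ∧ hd e ∈ W ∧ tl e ∉ W))).card) →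
    ∃ l : E → ℕ, ∀ i < k, ∀ W : Finset X, s ∈ W → t ∉ W →
      ∃ e, l e = i ∧ ((tl e ∈ W ∧ hd e ∉ W) ∨ (hd e ∈ W ∧ tl e ∉ W)) := by
  induction D using Finset.induction_on with
  | empty =>
    intro tl hd h
    obtain ⟨l, hl⟩ := dirMenger s t hst _ Finset.univ k tl hd rfl (by simpa using h)
    refine ⟨l, fun i hi W hs ht => ?_⟩
    obtain ⟨e, _, h1, h2⟩ := hl i hi W hs ht
    exact ⟨e, h1, Or.inl h2⟩
  | insert a D haD ih =>
    intro tl hd h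
    by_cases c1 : (∀ W : Finset X, s ∈ W → t ∉ W → k ≤ (Finset.univ.filter
      (fun e => (tl e ∈ W ∧ hd e ∉ W) ∨ (e ∈ D ∧ hd e ∈ W ∧ tl e ∉ W))).card)
    · exact ih tl hd c1
    by_cases c2 : (∀ W : Finset X, s ∈ W → t ∉ W → k ≤ (Finset.univ.filter
      (fun e => (Function.update tl a (hd a) e ∈ W ∧ Function.update hd a (tl a) e ∉ W) ∨
        (e ∈ D ∧ Function.update hd a (tl a) e ∈ W ∧ Function.update tl a (hd a) e ∉ W))).card)
    · obtain ⟨l, hl⟩ := ih _ _ c2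
      refine ⟨l, fun i hi W hs ht => ?_⟩
      obtain ⟨e, h1, h2⟩ := hl i hi W hs ht
      refine ⟨e, h1, ?_⟩
      by_cases hea : e = a
      · subst hea; simp only [Function.update_self] at h2; tauto
      · simpa only [Function.update_of_ne hea] using h2
    exfalso
    push Not at c1 c2
    obtain ⟨W, hsW, htW, hW⟩ := c1
    obtain ⟨Z, hsZ, htZ, hZ⟩ := c2
    have hW' := h W hsW htW
    have hZ' := h Z hsZ htZ
    have fW : hd a ∈ W ∧ tl a ∉ W := by
      by_contra hcon
      refine absurd (hW'.trans (Finset.card_le_card ?_)) (not_le.2 hW)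
      intro g hg
      simp only [Finset.mem_filter, Finset.mem_univ, true_and, Finset.mem_insert] at hg ⊢
      by_cases hga : g = a
      · subst hga; tauto
      · tauto
    have fZ : tl a ∈ Z ∧ hd a ∉ Z := by
      by_contra hcon
      refine absurd (hZ'.trans (Finset.card_le_card ?_)) (not_le.2 hZ)
      intro g hg
      simp only [Finset.mem_filter, Finset.mem_univ, true_and, Finset.mem_insert] at hg ⊢
      by_cases hga : g = a
      · subst hga; simp only [Function.update_self]; tauto
      · simp only [Function.update_of_ne hga]; tauto
    have hi := h (Z ∩ W) (by simp [hsZ, hsW]) (by simp [htZ])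
    have hu := h (Z ∪ W) (by simp [hsZ]) (by simp [htZ, htW])
    have key := add_le_add hi hu
    refine absurd (key.trans ?_) (not_le.2 (add_lt_add hW hZ))
    simp only [Finset.card_filter, ← Finset.sum_add_distrib]
    refine Finset.sum_le_sum fun g _ => ?_
    by_cases hga : g = a
    · subst hga
      simp [fW, fZ]
    · simp only [Function.update_of_ne hga, Finset.mem_insert, hga, false_or]
      by_cases a0 : g ∈ D <;> by_cases a1 : tl g ∈ Z <;> by_cases a2 : tl g ∈ W <;>
        by_cases a3 : hd g ∈ Z <;>
        by_cases a4 : hd g ∈ W <;> simp [a0, a1, a2, a3, a4]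

/-- Collapse inputs and outputs to single nodes. -/
def TN.collapse (N : TN) : N.V ⊕ N.S ⊕ N.T → N.V ⊕ Bool :=
  Sum.elim Sum.inl (Sum.elim (fun _ => Sum.inr false) (fun _ => Sum.inr true))

theorem TN.labels (N : TN) (k : ℕ)
    (hC : ∀ C : Finset N.E, N.IsCutSet C → k ≤ C.card) :
    ∃ l : N.E → ℕ, ∀ i < k, ∀ f : N.V ⊕ N.S ⊕ N.T → Bool,
      (∀ u : N.S, f (Sum.inr (Sum.inl u)) = false) →
      (∀ u : N.T, f (Sum.inr (Sum.inr u)) = true) →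
      ∃ e, l e = i ∧ f (N.ends e 0) ≠ f (N.ends e 1) := by
  obtain ⟨l, hl⟩ := mixMenger (X := N.V ⊕ Bool) (E := N.E) (Sum.inr false) (Sum.inr true) (by simp) k
    Finset.univ (fun e => N.collapse (N.ends e 0)) (fun e => N.collapse (N.ends e 1)) (by
      intro W hs ht
      refine (hC (Finset.univ.filter (fun e => N.collapse (N.ends e 0) ∈ W ∧ N.collapse (N.ends e 1) ∉ W ∨
        e ∈ (Finset.univ : Finset N.E) ∧ N.collapse (N.ends e 1) ∈ W ∧ N.collapse (N.ends e 0) ∉ W)) ?_)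
      refine ⟨fun x => decide (N.collapse x ∉ W), fun u => decide_eq_false (not_not.2 hs),
        fun u => decide_eq_true ht, fun e => ?_⟩
      simp only [Finset.mem_filter, Finset.mem_univ, true_and, ne_eq, decide_eq_decide]
      tauto)
  refine ⟨l, fun i hi f hfS hfT => ?_⟩
  let g : N.V ⊕ Bool → Bool := Sum.elim (fun v => f (Sum.inl v)) id
  have hg : ∀ x, g (N.collapse x) = f x := by
    rintro (v | u | u)
    · simp [g, TN.collapse]
    · simp [g, TN.collapse, hfS]
    · simp [g, TN.collapse, hfT]
  obtain ⟨e, he, hh⟩ := hl i hi (Finset.univ.filter (fun x => g x = false)) (by simp [g]) (by simp [g])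
  refine ⟨e, he, ?_⟩
  simp only [Finset.mem_filter, Finset.mem_univ, true_and, hg] at hh
  rcases hh with ⟨a, b⟩ | ⟨a, b⟩
  · rw [a]; exact fun h => b h.symm
  · rw [a]; exact b

theorem TN.inEdge_eq_s4 (N : TN) (u : N.S) (e : N.E) (j : Fin 2)
    (h : N.ends e j = Sum.inr (Sum.inl u)) : N.inEdge u = e := by
  have := (N.openS u).choose_spec.2 (e, j) h
  unfold TN.inEdge
  rw [← this]

theorem TN.outEdge_eq_s4 (N : TN) (u : N.T) (e : N.E) (j : Fin 2)
    (h : N.ends e j = Sum.inr (Sum.inr u)) : N.outEdge u = e := by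
  have := (N.openT u).choose_spec.2 (e, j) h
  unfold TN.outEdge
  rw [← this]

theorem TN.main (N : TN) (d : ℕ) (hd : 0 < d) (hmin : ∀ e : N.E, d ≤ N.c e) (k : ℕ)
    (hC : ∀ C : Finset N.E, N.IsCutSet C → k ≤ C.card) : d ^ k ≤ N.QMF := by
  obtain ⟨l, hl⟩ := N.labels k hC
  let T : N.Assignment := fun v idx =>
    if ∃ x : ℕ → ℕ, ∀ p : N.Legs v, l p.1.1 < k → (idx p : ℕ) = x (l p.1.1) then 1 else 0
  let val : (Fin k → Fin d) → (e : N.E) → Fin (N.c e) := fun x e =>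
    if h : l e < k then ⟨x ⟨l e, h⟩, (x ⟨l e, h⟩).2.trans_le (hmin e)⟩ else ⟨0, N.c_pos e⟩
  have hval : ∀ x e (h : l e < k), (val x e : ℕ) = x ⟨l e, h⟩ := by
    intro x e h; simp [val, h]
  let r : (Fin k → Fin d) → N.OutIdx := fun x u => val x (N.outEdge u)
  let c : (Fin k → Fin d) → N.InIdx := fun x u => val x (N.inEdge u)
  have hT : ∀ W : (e : N.E) → Fin (N.c e), (∏ v : N.V, T v (fun p => W p.1.1)) =
      if (∀ v : N.V, ∃ x : ℕ → ℕ, ∀ p : N.Legs v, l p.1.1 < k → (W p.1.1 : ℕ) = x (l p.1.1))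
      then 1 else 0 := by
    intro W
    simp only [T]
    rw [Finset.prod_ite_zero]
    simp
  have hβ : ∀ iT iS, N.β T iT iS = ((Finset.univ.filter (fun W : (e : N.E) → Fin (N.c e) =>
      ((∀ u : N.S, W (N.inEdge u) = iS u) ∧ (∀ u : N.T, W (N.outEdge u) = iT u)) ∧
      (∀ v : N.V, ∃ x : ℕ → ℕ, ∀ p : N.Legs v, l p.1.1 < k → (W p.1.1 : ℕ) = x (l p.1.1)))).card : ℂ) := by
    intro iT iS
    unfold TN.β
    simp only [hT]
    rw [Finset.card_filter]
    push_cast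
    refine Finset.sum_congr rfl fun W _ => ?_
    split_ifs <;> first | rfl | (exfalso; tauto)
  have hdiag : ∀ x, N.β T (r x) (c x) ≠ 0 := by
    intro x
    rw [hβ, Nat.cast_ne_zero]
    refine (Finset.card_pos.2 ⟨val x, ?_⟩).ne'
    simp only [Finset.mem_filter, Finset.mem_univ, true_and]
    refine ⟨⟨fun u => rfl, fun u => rfl⟩, fun v =>
      ⟨fun i => if h : i < k then x ⟨i, h⟩ else 0, fun p hp => ?_⟩⟩
    exact (hval x _ hp).trans (dif_pos (c := l p.1.1 < k) (t := fun h => (x ⟨l p.1.1, h⟩ : ℕ)) hp).symm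
  have hoff : ∀ y x, y ≠ x → N.β T (r y) (c x) = 0 := by
    intro y x hyx
    rw [hβ, Nat.cast_eq_zero, Finset.card_eq_zero, Finset.eq_empty_iff_forall_notMem]
    intro W hWm
    obtain ⟨⟨hS, hTT⟩, hV⟩ := ((@Finset.mem_filter _ _ (_) _ _).1 hWm).2
    obtain ⟨i, hi⟩ := Function.ne_iff.1 hyx
    let f : N.V ⊕ N.S ⊕ N.T → Bool := Sum.elim
      (fun v => decide (¬ ∃ p : N.Legs v, l p.1.1 = i ∧ (W p.1.1 : ℕ) = x i))
      (Sum.elim (fun _ => false) (fun _ => true))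
    obtain ⟨e, he, hne⟩ := hl i i.2 f (fun _ => rfl) (fun _ => rfl)
    have hek : l e < k := by rw [he]; exact i.2
    have hei : (⟨l e, hek⟩ : Fin k) = i := Fin.ext he
    have claim : ∀ j, f (N.ends e j) = decide ((W e : ℕ) ≠ x i) := by
      intro j
      rcases hj : N.ends e j with v | u | u
      · simp only [f, Sum.elim_inl, decide_eq_decide, not_iff_not]
        constructor
        · rintro ⟨p, hp, hpx⟩
          obtain ⟨z, hz⟩ := hV v
          have h1 := hz p (by rw [hp]; exact i.2)
          have h2 := hz ⟨(e, j), hj⟩ hek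
          simp only at h2
          rw [h2, he, ← hp, ← h1, hpx]
        · intro h
          exact ⟨⟨(e, j), hj⟩, he, h⟩
      · have h0 := N.inEdge_eq_s4 u e j hj
        have h1 := hS u
        subst h0
        simp only [f, Sum.elim_inr, Sum.elim_inl]
        symm
        rw [decide_eq_false_iff_not, not_not, h1]
        simp only [c]
        rw [hval x _ hek, hei]
      · have h0 := N.outEdge_eq_s4 u e j hj
        have h1 := hTT u
        subst h0
        simp only [f, Sum.elim_inr]
        symm
        rw [decide_eq_true_iff, h1]
        simp only [r]
        rw [hval y _ hek, hei]
        exact fun h => hi (Fin.ext h)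
    exact hne ((claim 0).trans (claim 1).symm)
  have hsub : (N.β T).submatrix r c = Matrix.diagonal (fun x => N.β T (r x) (c x)) := by
    ext y x
    by_cases h : y = x
    · subst h; simp
    · rw [Matrix.diagonal_apply_ne _ h]; exact hoff y x h
  have hrank : d ^ k ≤ (N.β T).rank := by
    have h1 : ((N.β T).submatrix r c).rank = d ^ k := by
      rw [hsub, Matrix.rank_diagonal]
      simp [hdiag]
    rw [← h1]
    exact Matrix.rank_submatrix_le _ _ _
  refine hrank.trans (le_csSup ⟨Fintype.card N.InIdx, ?_⟩ ⟨T, rfl⟩)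
  rintro _ ⟨T', rfl⟩
  exact Matrix.rank_le_card_width _

/-- Lower bound on quantum capacity: if every edge capacity is at least `dmin` and the
classical min-cut (each edge counted with capacity 1) has cardinality `Ccard`, then
`QMF ≥ dmin ^ Ccard`. -/
theorem stmt_4 (N : TN) (dmin : ℕ) (hmin : ∀ e : N.E, dmin ≤ N.c e)
    (Ccard : ℕ)
    (hC : Ccard = sInf {m : ℕ | ∃ C : Finset N.E, N.IsCutSet C ∧ m = C.card}) :
    dmin ^ Ccard ≤ N.QMF := by
  have h0 : ∀ C : Finset N.E, N.IsCutSet C → Ccard ≤ C.card := by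
    intro C h
    rw [hC]
    exact Nat.sInf_le ⟨C, h, rfl⟩
  refine le_trans (Nat.pow_le_pow_left (le_max_left dmin 1) Ccard)
    (N.main (max dmin 1) (by simp) (fun e => max_le (hmin e) (N.c_pos e)) Ccard h0)
end

section
/- Let n ≥ 2 and 1 ≤ j, k < n. Suppose T₁ : ℂ² → ℂ² ⊗ ℂ² is the map |0⟩ ↦ |00⟩, |1⟩ ↦ |11⟩, and T₂ : ℂⁿ ⊗ ℂ² → ℂ^{2n−k}, T₃ : ℂ² ⊗ ℂⁿ → ℂ^{2n−j} are linear maps such that there exist linearly independent families {v₁,…,v_k}, {u₁,…,u_k} in ℂⁿ with T₂(v_i ⊗ |0⟩) = T₂(u_i ⊗ |1⟩) for all i, and linearly independent families {w₁,…,w_j}, {x₁,…,x_j} in ℂⁿ with T₃(|0⟩ ⊗ w_h) = T₃(|1⟩ ⊗ x_h) for all h. Then the composite linear map (T₂ ⊗ T₃) ∘ (Id_{ℂⁿ} ⊗ T₁ ⊗ Id_{ℂⁿ}) : ℂⁿ ⊗ ℂ² ⊗ ℂⁿ → ℂ^{2n−k} ⊗ ℂ^{2n−j} has rank at most 2n²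 − jk. -/
open scoped TensorProduct

noncomputable section

set_option maxHeartbeats 1000000
set_option synthInstance.maxHeartbeats 200000

/-- `Id ⊗ (T₁ ⊗ Id) : ℂⁿ ⊗ (ℂ² ⊗ ℂⁿ) → ℂⁿ ⊗ ((ℂ² ⊗ ℂ²) ⊗ ℂⁿ)`. -/
def step0 (n : ℕ) (T₁ : (Fin 2 → ℂ) →ₗ[ℂ] (Fin 2 → ℂ) ⊗[ℂ] (Fin 2 → ℂ)) :
    (Fin n → ℂ) ⊗[ℂ] ((Fin 2 → ℂ) ⊗[ℂ] (Fin n → ℂ)) →ₗ[ℂ]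
      (Fin n → ℂ) ⊗[ℂ] (((Fin 2 → ℂ) ⊗[ℂ] (Fin 2 → ℂ)) ⊗[ℂ] (Fin n → ℂ)) :=
  TensorProduct.map LinearMap.id (TensorProduct.map T₁ LinearMap.id)

/-- Regrouping `ℂⁿ ⊗ ((ℂ² ⊗ ℂ²) ⊗ ℂⁿ) ≃ (ℂⁿ ⊗ ℂ²) ⊗ (ℂ² ⊗ ℂⁿ)`. -/
def regroup (n : ℕ) :
    (Fin n → ℂ) ⊗[ℂ] (((Fin 2 → ℂ) ⊗[ℂ] (Fin 2 → ℂ)) ⊗[ℂ] (Fin n → ℂ)) →ₗ[ℂ]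
      ((Fin n → ℂ) ⊗[ℂ] (Fin 2 → ℂ)) ⊗[ℂ] ((Fin 2 → ℂ) ⊗[ℂ] (Fin n → ℂ)) :=
  (TensorProduct.assoc ℂ (Fin n → ℂ) (Fin 2 → ℂ)
      ((Fin 2 → ℂ) ⊗[ℂ] (Fin n → ℂ))).symm.toLinearMap ∘ₗ
    TensorProduct.map LinearMap.id
      (TensorProduct.assoc ℂ (Fin 2 → ℂ) (Fin 2 → ℂ) (Fin n → ℂ)).toLinearMap

/-- If `T₁` is the copy map `|i⟩ ↦ |ii⟩` on `ℂ²`, and `T₂ : ℂⁿ ⊗ ℂ² → ℂ^{2n−k}`,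
`T₃ : ℂ² ⊗ ℂⁿ → ℂ^{2n−j}` identify the images of linearly independent `k`- resp. `j`-families
as stated, then `(T₂ ⊗ T₃) ∘ (Id ⊗ T₁ ⊗ Id)` has rank at most `2n² − jk`. -/
theorem stmt_7 (n j k : ℕ) (hn : 2 ≤ n) (hj1 : 1 ≤ j) (hjn : j < n) (hk1 : 1 ≤ k) (hkn : k < n)
    (T₁ : (Fin 2 → ℂ) →ₗ[ℂ] (Fin 2 → ℂ) ⊗[ℂ] (Fin 2 → ℂ))
    (hT₁ : ∀ i : Fin 2, T₁ (Pi.single i 1) =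
      (Pi.single i 1 : Fin 2 → ℂ) ⊗ₜ[ℂ] (Pi.single i 1 : Fin 2 → ℂ))
    (T₂ : (Fin n → ℂ) ⊗[ℂ] (Fin 2 → ℂ) →ₗ[ℂ] (Fin (2 * n - k) → ℂ))
    (T₃ : (Fin 2 → ℂ) ⊗[ℂ] (Fin n → ℂ) →ₗ[ℂ] (Fin (2 * n - j) → ℂ))
    (v u : Fin k → (Fin n → ℂ)) (hv : LinearIndependent ℂ v) (hu : LinearIndependent ℂ u)
    (hvu : ∀ i, T₂ (v i ⊗ₜ[ℂ] (Pi.single 0 1 : Fin 2 → ℂ))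
      = T₂ (u i ⊗ₜ[ℂ] (Pi.single 1 1 : Fin 2 → ℂ)))
    (w x : Fin j → (Fin n → ℂ)) (hw : LinearIndependent ℂ w) (hx : LinearIndependent ℂ x)
    (hwx : ∀ h, T₃ ((Pi.single 0 1 : Fin 2 → ℂ) ⊗ₜ[ℂ] w h)
      = T₃ ((Pi.single 1 1 : Fin 2 → ℂ) ⊗ₜ[ℂ] x h)) :
    Module.finrank ℂ
        ↥(LinearMap.range (TensorProduct.map T₂ T₃ ∘ₗ (regroup n ∘ₗ step0 n T₁)))
      ≤ 2 * n ^ 2 - j * k := by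
  set F := TensorProduct.map T₂ T₃ ∘ₗ (regroup n ∘ₗ step0 n T₁) with hF
  let z : Fin k × Fin j → (Fin n → ℂ) ⊗[ℂ] ((Fin 2 → ℂ) ⊗[ℂ] (Fin n → ℂ)) := fun p =>
    v p.1 ⊗ₜ[ℂ] ((Pi.single 0 1 : Fin 2 → ℂ) ⊗ₜ[ℂ] w p.2)
      - u p.1 ⊗ₜ[ℂ] ((Pi.single 1 1 : Fin 2 → ℂ) ⊗ₜ[ℂ] x p.2)
  have hker : ∀ p, z p ∈ LinearMap.ker F := by
    intro p
    simp [z, hF, regroup, step0, hT₁, hvu, hwx]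
  let P : (Fin 2 → ℂ) ⊗[ℂ] (Fin n → ℂ) →ₗ[ℂ] (Fin n → ℂ) :=
    (TensorProduct.lid ℂ (Fin n → ℂ)).toLinearMap ∘ₗ
      TensorProduct.map (LinearMap.proj 0) LinearMap.id
  let Q : (Fin n → ℂ) ⊗[ℂ] ((Fin 2 → ℂ) ⊗[ℂ] (Fin n → ℂ)) →ₗ[ℂ]
      (Fin n → ℂ) ⊗[ℂ] (Fin n → ℂ) := TensorProduct.map LinearMap.id P
  have hz : LinearIndependent ℂ z := by
    apply LinearIndependent.of_comp Q
    have h : Q ∘ z = fun p => v p.1 ⊗ₜ[ℂ] w p.2 := by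
      funext p
      simp [z, Q, P]
    rw [h]
    exact hv.tmul_of_isDomain hw
  let z' : Fin k × Fin j → LinearMap.ker F := fun p => ⟨z p, hker p⟩
  have hz' : LinearIndependent ℂ z' :=
    LinearIndependent.of_comp (LinearMap.ker F).subtype hz
  have h1 := hz'.fintype_card_le_finrank
  have h2 := LinearMap.finrank_range_add_finrank_ker F
  have h3 : Module.finrank ℂ ((Fin n → ℂ) ⊗[ℂ] ((Fin 2 → ℂ) ⊗[ℂ] (Fin n → ℂ))) = 2 * n ^ 2 := by
    simp [Module.finrank_tensorProduct]
    ring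
  rw [h3] at h2
  simp only [Fintype.card_prod, Fintype.card_fin] at h1
  rw [mul_comm k j] at h1
  omega

end
end

section
/- For the tensor network with three input edges of capacities 2, 2, 2, two internal edges of capacity 2 connecting a central trivalent vertex to two output vertices, and two output edges of capacities 3 and 3 (as in Figure 'maximal rank = 7'), the quantum min-cut is 8 but the quantum max-flow is at most 7; hence QMF < QMC. -/
open scoped TensorProduct

noncomputable section

/-- `Id ⊗ (T₁ ⊗ Id) : ℂ² ⊗ (ℂ² ⊗ ℂ²) → ℂ² ⊗ ((ℂ² ⊗ ℂ²) ⊗ ℂ²)`. -/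
def middle (T₁ : (Fin 2 → ℂ) →ₗ[ℂ] (Fin 2 → ℂ) ⊗[ℂ] (Fin 2 → ℂ)) :
    (Fin 2 → ℂ) ⊗[ℂ] ((Fin 2 → ℂ) ⊗[ℂ] (Fin 2 → ℂ)) →ₗ[ℂ]
      (Fin 2 → ℂ) ⊗[ℂ] (((Fin 2 → ℂ) ⊗[ℂ] (Fin 2 → ℂ)) ⊗[ℂ] (Fin 2 → ℂ)) :=
  TensorProduct.map LinearMap.id (TensorProduct.map T₁ LinearMap.id)

/-- Regrouping `ℂ² ⊗ ((ℂ² ⊗ ℂ²) ⊗ ℂ²) ≃ (ℂ² ⊗ ℂ²) ⊗ (ℂ² ⊗ ℂ²)`. -/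
def regroup' :
    (Fin 2 → ℂ) ⊗[ℂ] (((Fin 2 → ℂ) ⊗[ℂ] (Fin 2 → ℂ)) ⊗[ℂ] (Fin 2 → ℂ)) →ₗ[ℂ]
      ((Fin 2 → ℂ) ⊗[ℂ] (Fin 2 → ℂ)) ⊗[ℂ] ((Fin 2 → ℂ) ⊗[ℂ] (Fin 2 → ℂ)) :=
  (TensorProduct.assoc ℂ (Fin 2 → ℂ) (Fin 2 → ℂ)
      ((Fin 2 → ℂ) ⊗[ℂ] (Fin 2 → ℂ))).symm.toLinearMap ∘ₗ
    TensorProduct.map LinearMap.id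
      (TensorProduct.assoc ℂ (Fin 2 → ℂ) (Fin 2 → ℂ) (Fin 2 → ℂ)).toLinearMap

/-- The contracted map of the network of Figure "maximal rank = 7":
`(T₂ ⊗ T₃) ∘ (Id ⊗ T₁ ⊗ Id) : ℂ² ⊗ ℂ² ⊗ ℂ² → ℂ³ ⊗ ℂ³`. -/
def network (T₁ : (Fin 2 → ℂ) →ₗ[ℂ] (Fin 2 → ℂ) ⊗[ℂ] (Fin 2 → ℂ))
    (T₂ T₃ : (Fin 2 → ℂ) ⊗[ℂ] (Fin 2 → ℂ) →ₗ[ℂ] (Fin 3 → ℂ)) :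
    (Fin 2 → ℂ) ⊗[ℂ] ((Fin 2 → ℂ) ⊗[ℂ] (Fin 2 → ℂ)) →ₗ[ℂ]
      (Fin 3 → ℂ) ⊗[ℂ] (Fin 3 → ℂ) :=
  TensorProduct.map T₂ T₃ ∘ₗ (regroup' ∘ₗ middle T₁)


lemma exists_dep (g : Fin 2 → Fin 2 → Fin 3 → ℂ) :
    ∃ u : Fin 2 × Fin 2 → ℂ, u ≠ 0 ∧ ∀ p, ∑ a, ∑ i, u (a, i) * g a i p = 0 := by
  let φ : (Fin 2 × Fin 2 → ℂ) →ₗ[ℂ] (Fin 3 → ℂ) :=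
    Fintype.linearCombination ℂ (fun x : Fin 2 × Fin 2 => g x.1 x.2)
  have h : LinearMap.ker φ ≠ ⊥ := LinearMap.ker_ne_bot_of_finrank_lt (by simp)
  obtain ⟨u, hu, h0⟩ := (Submodule.ne_bot_iff _).1 h
  refine ⟨u, h0, fun p => ?_⟩
  have := congrFun (LinearMap.mem_ker.1 hu) p
  simpa [φ, Fintype.linearCombination_apply, Fintype.sum_prod_type] using this

/-- degenerate case -/
lemma degen (t : Fin 2 → Fin 2 → Fin 2 → ℂ) (g h : Fin 2 → Fin 2 → Fin 3 → ℂ)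
    (u : Fin 2 × Fin 2 → ℂ) (hu0 : u ≠ 0) (hu : ∀ p, ∑ a, ∑ i, u (a, i) * g a i p = 0)
    (hdet : u (0,0) * u (1,1) - u (0,1) * u (1,0) = 0) :
    ∃ w : Fin 2 → Fin 2 → Fin 2 → ℂ, w ≠ 0 ∧
      ∀ p q, ∑ a, ∑ k, ∑ c, w a k c * ∑ i, ∑ j, t k i j * (g a i p * h j c q) = 0 := by
  obtain ⟨α, e, hα, he, hue⟩ : ∃ α e : Fin 2 → ℂ, α ≠ 0 ∧ e ≠ 0 ∧ ∀ a i, u (a, i) = α a * e i := by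
    by_cases h00 : u (0,0) = 0 ∧ u (0,1) = 0
    · refine ⟨![0,1], fun i => u (1, i), fun h => by simpa using congrFun h 1, ?_, ?_⟩
      · intro h
        apply hu0
        ext ⟨a, i⟩
        have h1 := congrFun h 0
        have h2 := congrFun h 1
        fin_cases a <;> fin_cases i <;> simp_all
      · intro a i
        fin_cases a <;> fin_cases i <;> simp_all
    · by_cases hz : u (0,0) = 0
      · have h1 : u (0,1) ≠ 0 := fun h => h00 ⟨hz, h⟩
        refine ⟨![1, u (1,1) / u (0,1)], fun i => u (0, i), fun h => by simpa using congrFun h 0,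
          fun h => h1 (congrFun h 1), ?_⟩
        intro a i
        fin_cases a <;> fin_cases i <;> simp
        · rw [hz] at hdet ⊢; simp_all
        · field_simp
      · refine ⟨![1, u (1,0) / u (0,0)], fun i => u (0, i), fun h => by simpa using congrFun h 0,
          fun h => hz (congrFun h 0), ?_⟩
        intro a i
        fin_cases a <;> fin_cases i <;> simp
        · field_simp
        · field_simp; linear_combination hdet
  -- γ
  let G : Fin 2 → Fin 3 → ℂ := fun i p => ∑ a, α a * g a i p
  have hG : ∀ p, e 0 * G 0 p + e 1 * G 1 p = 0 := by
    intro p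
    have := hu p
    simp only [hue, Fin.sum_univ_two, G] at this ⊢
    linear_combination this
  obtain ⟨ξ, γ, hξ⟩ : ∃ (ξ : Fin 2 → ℂ) (γ : Fin 3 → ℂ), ∀ i p, G i p = ξ i * γ p := by
    by_cases h0 : e 0 = 0
    · have h1 : e 1 ≠ 0 := by
        intro h1; apply he; ext i; fin_cases i <;> simp_all
      refine ⟨![1, 0], G 0, ?_⟩
      intro i p
      have := hG p
      fin_cases i <;> simp_all
    · refine ⟨![- e 1 / e 0, 1], G 1, ?_⟩
      intro i p
      have := hG p
      fin_cases i <;> simp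
      field_simp
      linear_combination this
  obtain ⟨z, hz0, hz⟩ := exists_dep (fun k c q => ∑ i, ∑ j, t k i j * ξ i * h j c q)
  refine ⟨fun a k c => α a * z (k, c), ?_, ?_⟩
  · intro hw
    obtain ⟨a, ha⟩ := Function.ne_iff.1 hα
    obtain ⟨⟨k, c⟩, hk⟩ := Function.ne_iff.1 hz0
    have := congrFun (congrFun (congrFun hw a) k) c
    simp at this ha hk
    tauto
  · intro p q
    have h1 := hz q
    have a0 := hξ 0 p
    have a1 := hξ 1 p
    simp only [Fin.sum_univ_two, G] at h1 a0 a1 ⊢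
    linear_combination γ p * h1 +
      (z (0,0) * (t 0 0 0 * h 0 0 q + t 0 0 1 * h 1 0 q) + z (0,1) * (t 0 0 0 * h 0 1 q + t 0 0 1 * h 1 1 q)
       + z (1,0) * (t 1 0 0 * h 0 0 q + t 1 0 1 * h 1 0 q) + z (1,1) * (t 1 0 0 * h 0 1 q + t 1 0 1 * h 1 1 q)) * a0 +
      (z (0,0) * (t 0 1 0 * h 0 0 q + t 0 1 1 * h 1 0 q) + z (0,1) * (t 0 1 0 * h 0 1 q + t 0 1 1 * h 1 1 q)
       + z (1,0) * (t 1 1 0 * h 0 0 q + t 1 1 1 * h 1 0 q) + z (1,1) * (t 1 1 0 * h 0 1 q + t 1 1 1 * h 1 1 q)) * a1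

/-- polynomial identity: `T₂ ∧ T₁` has no component in `Sym² ⊗ Sym²`. -/
lemma key_identity (t : Fin 2 → Fin 2 → Fin 2 → ℂ) (G H : Fin 2 → Fin 2 → ℂ)
    (hG : G 0 0 + G 1 1 = 0) (hH : H 0 0 + H 1 1 = 0) (s : Fin 2 → Fin 2 → Fin 2 → ℂ)
    (hs : ∀ k, s k 0 0 = t k 1 1 ∧ s k 0 1 = - t k 1 0 ∧ s k 1 0 = - t k 0 1 ∧ s k 1 1 = t k 0 0) :
    ∑ x, ∑ y, ∑ i, ∑ j, (s 1 x y * t 0 i j - s 0 x y * t 1 i j) * (G x i * H j y) = 0 := by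
  have h1 : G 1 1 = - G 0 0 := by linear_combination hG
  have h2 : H 1 1 = - H 0 0 := by linear_combination hH
  obtain ⟨a1, a2, a3, a4⟩ := hs 0
  obtain ⟨b1, b2, b3, b4⟩ := hs 1
  simp only [Fin.sum_univ_two, a1, a2, a3, a4, b1, b2, b3, b4, h1, h2]
  ring

lemma coord (t : Fin 2 → Fin 2 → Fin 2 → ℂ) (g h : Fin 2 → Fin 2 → Fin 3 → ℂ) :
    ∃ w : Fin 2 → Fin 2 → Fin 2 → ℂ, w ≠ 0 ∧
      ∀ p q, ∑ a, ∑ k, ∑ c, w a k c * ∑ i, ∑ j, t k i j * (g a i p * h j c q) = 0 := by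
  obtain ⟨u, hu0, hu⟩ := exists_dep g
  obtain ⟨v, hv0, hv⟩ := exists_dep h
  by_cases du : u (0,0) * u (1,1) - u (0,1) * u (1,0) = 0
  · exact degen t g h u hu0 hu du
  by_cases dv : v (0,0) * v (1,1) - v (0,1) * v (1,0) = 0
  · obtain ⟨w, hw0, hw⟩ := degen (fun k i j => t k j i) (fun c j => h j c) (fun i a => g a i)
      (fun x => v (x.2, x.1)) (fun hh => hv0 (by ext ⟨a, i⟩; exact congrFun hh (i, a)))
      (fun p => by have := hv p; simp only [Fin.sum_univ_two] at this ⊢; linear_combination this)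
      (by simp only; linear_combination dv)
    refine ⟨fun a k c => w c k a, ?_, ?_⟩
    · intro hh; apply hw0; ext a k c; exact congrFun (congrFun (congrFun hh c) k) a
    · intro p q
      have := hw q p
      simp only [Fin.sum_univ_two] at this ⊢
      linear_combination this
  by_cases ht : t = 0
  · exact ⟨1, one_ne_zero, by simp [ht]⟩
  let s : Fin 2 → Fin 2 → Fin 2 → ℂ :=
    fun k => ![![t k 1 1, - t k 1 0], ![- t k 0 1, t k 0 0]]
  let m : Fin 2 → Fin 2 → Fin 2 → ℂ := fun k a c => ∑ x, ∑ y, u (a, x) * s k x y * v (y, c)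
  have hm : ∀ k, (∀ a c, m k a c = 0) → ∀ i j, t k i j = 0 := by
    intro k hk
    have hd := mul_ne_zero du dv
    have e00 := hk 0 0
    have e01 := hk 0 1
    have e10 := hk 1 0
    have e11 := hk 1 1
    simp [m, s, Fin.sum_univ_two] at e00 e01 e10 e11
    intro i j
    apply (mul_eq_zero.1 (?_ : (_ * _) * t k i j = 0)).resolve_left hd
    fin_cases i <;> fin_cases j <;> simp only [Fin.zero_eta, Fin.mk_one]
    · linear_combination u (0,0) * (v (0,0) * e11 - v (0,1) * e10) - u (1,0) * (v (0,0) * e01 - v (0,1) * e00)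
    · linear_combination -(u (0,0) * (-v (1,0) * e11 + v (1,1) * e10) - u (1,0) * (-v (1,0) * e01 + v (1,1) * e00))
    · linear_combination -(-u (0,1) * (v (0,0) * e11 - v (0,1) * e10) + u (1,1) * (v (0,0) * e01 - v (0,1) * e00))
    · linear_combination (-u (0,1) * (-v (1,0) * e11 + v (1,1) * e10) + u (1,1) * (-v (1,0) * e01 + v (1,1) * e00))
  refine ⟨fun a k c => ![m 1 a c, - m 0 a c] k, ?_, ?_⟩
  · intro hw
    apply ht
    have h0 := hm 0 (fun a c => by simpa using congrFun (congrFun (congrFun hw a) 1) c)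
    have h1 := hm 1 (fun a c => by simpa using congrFun (congrFun (congrFun hw a) 0) c)
    ext k i j
    fin_cases k
    · exact h0 i j
    · exact h1 i j
  · intro p q
    have := key_identity t (fun x i => ∑ a, u (a, x) * g a i p) (fun j y => ∑ c, v (y, c) * h j c q)
      (by have := hu p; simp only [Fin.sum_univ_two] at this ⊢; linear_combination this)
      (by have := hv q; simp only [Fin.sum_univ_two] at this ⊢; linear_combination this) s
      (by intro k; simp [s])
    simp only [m]
    generalize s = s' at this ⊢
    simp only [Fin.sum_univ_two, Matrix.cons_val_zero, Matrix.cons_val_one] at this ⊢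
    linear_combination this

lemma network_tmul (T₁ : (Fin 2 → ℂ) →ₗ[ℂ] (Fin 2 → ℂ) ⊗[ℂ] (Fin 2 → ℂ))
    (T₂ T₃ : (Fin 2 → ℂ) ⊗[ℂ] (Fin 2 → ℂ) →ₗ[ℂ] (Fin 3 → ℂ)) (a b c : Fin 2 → ℂ)
    {ι : Type*} (s : Finset ι) (r : ι → ℂ) (x y : ι → Fin 2 → ℂ)
    (hb : T₁ b = ∑ i ∈ s, r i • (x i ⊗ₜ[ℂ] y i)) :
    network T₁ T₂ T₃ (a ⊗ₜ (b ⊗ₜ c)) = ∑ i ∈ s, r i • (T₂ (a ⊗ₜ x i) ⊗ₜ[ℂ] T₃ (y i ⊗ₜ c)) := by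
  simp only [network, regroup', middle, LinearMap.comp_apply, TensorProduct.map_tmul,
    LinearMap.id_apply, hb, TensorProduct.sum_tmul, TensorProduct.tmul_sum, map_sum,
    ← TensorProduct.smul_tmul', TensorProduct.tmul_smul, map_smul, LinearEquiv.coe_coe,
    TensorProduct.assoc_tmul, TensorProduct.assoc_symm_tmul]

lemma upper (T₁ : (Fin 2 → ℂ) →ₗ[ℂ] (Fin 2 → ℂ) ⊗[ℂ] (Fin 2 → ℂ))
    (T₂ T₃ : (Fin 2 → ℂ) ⊗[ℂ] (Fin 2 → ℂ) →ₗ[ℂ] (Fin 3 → ℂ)) :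
    Module.finrank ℂ ↥(LinearMap.range (network T₁ T₂ T₃)) ≤ 7 := by
  let e := Pi.basisFun ℂ (Fin 2)
  let f := Pi.basisFun ℂ (Fin 3)
  let B := e.tensorProduct (e.tensorProduct e)
  obtain ⟨w, hw0, hw⟩ := coord (fun k i j => (e.tensorProduct e).repr (T₁ (e k)) (i, j))
    (fun a i => T₂ (e a ⊗ₜ e i)) (fun j c => T₃ (e j ⊗ₜ e c))
  let X := ∑ x : Fin 2 × Fin 2 × Fin 2, w x.1 x.2.1 x.2.2 • B x
  have hX0 : X ≠ 0 := by
    intro h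
    apply hw0
    have := Fintype.linearIndependent_iff.1 B.linearIndependent _ h
    ext a k c
    exact this (a, k, c)
  have hX : network T₁ T₂ T₃ X = 0 := by
    apply (f.tensorProduct f).repr.injective
    ext ⟨p, q⟩
    rw [map_zero, Finsupp.zero_apply, ← hw p q]
    have key : ∀ a k c, network T₁ T₂ T₃ (B (a, k, c)) = ∑ x : Fin 2 × Fin 2,
        (e.tensorProduct e).repr (T₁ (e k)) x • (T₂ (e a ⊗ₜ e x.1) ⊗ₜ[ℂ] T₃ (e x.2 ⊗ₜ e c)) := by
      intro a k c
      simp only [B, Module.Basis.tensorProduct_apply]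
      apply network_tmul
      conv_lhs => rw [← (e.tensorProduct e).sum_repr (T₁ (e k))]
      simp only [Module.Basis.tensorProduct_apply']
    simp only [X, map_sum, map_smul, Fintype.sum_prod_type, key, Finsupp.coe_finsetSum,
      Finset.sum_apply, Finsupp.smul_apply, Module.Basis.tensorProduct_repr_tmul_apply, smul_eq_mul]
    refine Finset.sum_congr rfl fun a _ => Finset.sum_congr rfl fun k _ =>
      Finset.sum_congr rfl fun c _ => congrArg _ (Finset.sum_congr rfl fun i _ =>
      Finset.sum_congr rfl fun j _ => congrArg _ ?_)
    simp only [f, Pi.basisFun_repr]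
    ring
  have hk : LinearMap.ker (network T₁ T₂ T₃) ≠ ⊥ :=
    (Submodule.ne_bot_iff _).2 ⟨X, hX, hX0⟩
  have h1 := LinearMap.finrank_range_add_finrank_ker (network T₁ T₂ T₃)
  have h2 : 0 < Module.finrank ℂ (LinearMap.ker (network T₁ T₂ T₃)) :=
    Nat.pos_of_ne_zero fun h => hk (Submodule.finrank_eq_zero.1 h)
  simp only [Module.finrank_tensorProduct, Module.finrank_fin_fun] at h1
  omega

/-- `e_i ↦ e_i ⊗ e_i`. -/
noncomputable def exT₁ : (Fin 2 → ℂ) →ₗ[ℂ] (Fin 2 → ℂ) ⊗[ℂ] (Fin 2 → ℂ) :=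
  (Pi.basisFun ℂ (Fin 2)).constr ℂ
    (fun i => Pi.basisFun ℂ (Fin 2) i ⊗ₜ[ℂ] Pi.basisFun ℂ (Fin 2) i)

/-- multiplication of linear forms in two variables. -/
noncomputable def exT₂ : (Fin 2 → ℂ) ⊗[ℂ] (Fin 2 → ℂ) →ₗ[ℂ] (Fin 3 → ℂ) :=
  TensorProduct.lift (LinearMap.mk₂ ℂ
    (fun x y => ![x 0 * y 0, x 0 * y 1 + x 1 * y 0, x 1 * y 1])
    (by intros; ext i; fin_cases i <;> simp <;> ring)
    (by intros; ext i; fin_cases i <;> simp <;> ring)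
    (by intros; ext i; fin_cases i <;> simp <;> ring)
    (by intros; ext i; fin_cases i <;> simp <;> ring))

lemma exT₂_apply (i j : Fin 2) (k : Fin 3) (h : i.val + j.val = k.val) :
    exT₂ (Pi.basisFun ℂ (Fin 2) i ⊗ₜ Pi.basisFun ℂ (Fin 2) j) = Pi.basisFun ℂ (Fin 3) k := by
  ext l
  fin_cases i <;> fin_cases j <;> fin_cases k <;> simp at h <;> fin_cases l <;>
    simp [exT₂]

lemma ex_mem (a b c : Fin 2) (p q : Fin 3) (hp : a.val + b.val = p.val)
    (hq : b.val + c.val = q.val) :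
    Pi.basisFun ℂ (Fin 3) p ⊗ₜ[ℂ] Pi.basisFun ℂ (Fin 3) q ∈
      LinearMap.range (network exT₁ exT₂ exT₂) := by
  refine ⟨Pi.basisFun ℂ (Fin 2) a ⊗ₜ (Pi.basisFun ℂ (Fin 2) b ⊗ₜ Pi.basisFun ℂ (Fin 2) c), ?_⟩
  rw [network_tmul exT₁ exT₂ exT₂ _ _ _ (Finset.univ : Finset Unit) (fun _ => 1)
    (fun _ => Pi.basisFun ℂ (Fin 2) b) (fun _ => Pi.basisFun ℂ (Fin 2) b)
    (by rw [exT₁, Module.Basis.constr_basis]; simp)]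
  simp only [exT₂_apply _ _ _ hp, exT₂_apply _ _ _ hq]
  simp

lemma lower : 7 ≤ Module.finrank ℂ ↥(LinearMap.range (network exT₁ exT₂ exT₂)) := by
  let f := Pi.basisFun ℂ (Fin 3)
  let S := {x : Fin 3 × Fin 3 // x ≠ (0, 2) ∧ x ≠ (2, 0)}
  have hli : LinearIndependent ℂ (fun x : S => f.tensorProduct f x.1) :=
    (f.tensorProduct f).linearIndependent.comp _ Subtype.val_injective
  have hle : Submodule.span ℂ (Set.range (fun x : S => f.tensorProduct f x.1)) ≤
      LinearMap.range (network exT₁ exT₂ exT₂) := by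
    rw [Submodule.span_le]
    rintro _ ⟨⟨⟨p, q⟩, h⟩, rfl⟩
    have : ∃ a b c : Fin 2, a.val + b.val = p.val ∧ b.val + c.val = q.val := by
      revert p q; decide
    obtain ⟨a, b, c, hp, hq⟩ := this
    simp only [Module.Basis.tensorProduct_apply]
    exact ex_mem a b c p q hp hq
  have h := Submodule.finrank_mono hle
  rw [finrank_span_eq_card hli] at h
  have hc : Fintype.card S = 7 := by decide
  omega

/-- For the network with three capacity-2 input edges, two capacity-2 internal edges and two
capacity-3 output edges, QMC = 8 but QMF ≤ 7 and 7 is achieved: every choice of tensors gives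
rank at most 7, and some choice achieves rank 7 (so QMF = 7 < 8 = QMC). -/
theorem stmt_9 :
    (∀ (T₁ : (Fin 2 → ℂ) →ₗ[ℂ] (Fin 2 → ℂ) ⊗[ℂ] (Fin 2 → ℂ))
        (T₂ T₃ : (Fin 2 → ℂ) ⊗[ℂ] (Fin 2 → ℂ) →ₗ[ℂ] (Fin 3 → ℂ)),
      Module.finrank ℂ ↥(LinearMap.range (network T₁ T₂ T₃)) ≤ 7) ∧
    (∃ (T₁ : (Fin 2 → ℂ) →ₗ[ℂ] (Fin 2 → ℂ) ⊗[ℂ] (Fin 2 → ℂ))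
        (T₂ T₃ : (Fin 2 → ℂ) ⊗[ℂ] (Fin 2 → ℂ) →ₗ[ℂ] (Fin 3 → ℂ)),
      Module.finrank ℂ ↥(LinearMap.range (network T₁ T₂ T₃)) = 7) :=
  ⟨upper, exT₁, exT₂, exT₂, le_antisymm (upper _ _ _) lower⟩

end
end

section
/- For a tensor network (G,c) in which every edge capacity is a power of a fixed integer d, the maximum entanglement entropy between inputs and outputs over all tensor assignments equals log QMC(G,c): MEE(G,c) = log QMC(G,c). -/
open scoped Classical

namespace TN

/-- The entanglement entropy between inputs and outputs of the normalized tensor-network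
state with matrix `C = β(G,c;𝒯)`: the von Neumann entropy of `ρ = CC†/Tr(CC†)`, computed
from the eigenvalues of the Hermitian matrix `CC†`. -/
noncomputable def EE (N : TN) (𝒯 : N.Assignment) : ℝ :=
  -∑ i, ((Matrix.isHermitian_mul_conjTranspose_self (N.β 𝒯)).eigenvalues i /
          ((N.β 𝒯) * (N.β 𝒯).conjTranspose).trace.re) *
        Real.log ((Matrix.isHermitian_mul_conjTranspose_self (N.β 𝒯)).eigenvalues i /
          ((N.β 𝒯) * (N.β 𝒯).conjTranspose).trace.re)

/-- The maximal entanglement entropy between inputs and outputs over all tensor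
assignments (with nonzero contracted state). -/
noncomputable def MEE (N : TN) : ℝ :=
  sSup {x : ℝ | ∃ 𝒯 : N.Assignment, N.β 𝒯 ≠ 0 ∧ x = N.EE 𝒯}

end TN

theorem mengerAux {X : Type} [Fintype X] [DecidableEq X] (n : ℕ) : ∀ (R : Finset (X × X)), R.card = n →
    ∀ (A B : Finset X) (k : ℕ),
    (∀ L Q : Finset X, (∀ x, x ∈ L ∨ x ∈ Q) → A ⊆ L → B ⊆ Q →
      (∀ u w, (u, w) ∈ R → u ∈ L → u ∉ Q → w ∈ L) → k ≤ (L ∩ Q).card) →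
    ∃ P : Fin k → Finset X, (∀ i j x, x ∈ P i → x ∈ P j → i = j) ∧
      ∀ i, ∃ a ∈ A, ∃ b ∈ B, a ∈ P i ∧ b ∈ P i ∧
        Relation.ReflTransGen (fun u w => (u, w) ∈ R ∧ u ∈ P i ∧ w ∈ P i) a b := by
  induction n using Nat.strong_induction_on with
  | _ n ih =>
  intro R hR A B k hk
  rcases R.eq_empty_or_nonempty with h0 | ⟨⟨x, y⟩, hxy⟩
  · subst h0
    have h1 := hk A (Aᶜ ∪ B) (by intro x; by_cases h : x ∈ A <;> simp [h]) (subset_refl _)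
      Finset.subset_union_right (by simp)
    have h2 : A ∩ (Aᶜ ∪ B) = A ∩ B := by ext; simp; tauto
    rw [h2] at h1
    obtain ⟨f⟩ : Nonempty (Fin k ↪ (A ∩ B : Finset X)) := by
      apply Function.Embedding.nonempty_of_card_le; rw [Fintype.card_coe, Fintype.card_fin]; exact h1
    refine ⟨fun i => {(f i).1}, ?_, ?_⟩
    · intro i j x hi hj
      simp only [Finset.mem_singleton] at hi hj
      exact f.injective (Subtype.ext (hi.symm.trans hj))
    · intro i
      have := Finset.mem_inter.1 (f i).2
      exact ⟨(f i).1, this.1, (f i).1, this.2, by simp, by simp, .refl⟩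
  set R' := R.erase (x, y) with hR'
  have hc : R'.card < n := by
    rw [← hR]; exact Finset.card_erase_lt_of_mem hxy
  have hsub : ∀ u w, (u, w) ∈ R → (u, w) ∈ R' ∨ (u = x ∧ w = y) := by
    intro u w h
    by_cases h' : (u, w) = (x, y)
    · right; simpa using h'
    · left; exact Finset.mem_erase.2 ⟨h', h⟩
  have hsub' : ∀ p, p ∈ R' → p ∈ R := fun p h => Finset.mem_of_mem_erase h
  by_cases hall : ∀ L Q : Finset X, (∀ x, x ∈ L ∨ x ∈ Q) → A ⊆ L → B ⊆ Q →
      (∀ u w, (u, w) ∈ R' → u ∈ L → u ∉ Q → w ∈ L) → k ≤ (L ∩ Q).card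
  · obtain ⟨P, h1, h2⟩ := ih _ hc R' rfl A B k hall
    refine ⟨P, h1, fun i => ?_⟩
    obtain ⟨a, ha, b, hb, h3, h4, h5⟩ := h2 i
    exact ⟨a, ha, b, hb, h3, h4, Relation.ReflTransGen.mono (fun u w h => ⟨hsub' _ h.1, h.2⟩) _ _ h5⟩
  push Not at hall
  obtain ⟨L, Q, hLQ, hAL, hBQ, hcl, hlt⟩ := hall
  have hnot : x ∈ L ∧ x ∉ Q ∧ y ∉ L := by
    by_contra hcon
    have := hk L Q hLQ hAL hBQ (by
      intro u w h hu hu'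
      rcases hsub u w h with h' | ⟨rfl, rfl⟩
      · exact hcl u w h' hu hu'
      · by_contra hw; exact hcon ⟨hu, hu', hw⟩)
    omega
  obtain ⟨hxL, hxQ, hyL⟩ := hnot
  have hyQ : y ∈ Q := (hLQ y).resolve_left hyL
  set Z := L ∩ Q with hZ
  have hxZ : x ∉ Z := by simp [hZ, hxQ]
  have hyZ : y ∉ Z := by simp [hZ, hyL]
  have hZk : Z.card + 1 = k := by
    have := hk L (insert x Q) (by intro z; rcases hLQ z with h | h <;> simp [h]) hAL
      (hBQ.trans (Finset.subset_insert _ _)) (by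
      intro u w h hu hu'
      simp only [Finset.mem_insert, not_or] at hu'
      rcases hsub u w h with h' | ⟨rfl, rfl⟩
      · exact hcl u w h' hu hu'.2
      · exact absurd rfl hu'.1)
    have h2 : L ∩ insert x Q = insert x Z := by
      ext z; simp only [hZ, Finset.mem_inter, Finset.mem_insert]
      constructor
      · tauto
      · rintro (rfl | h) <;> tauto
    rw [h2, Finset.card_insert_of_notMem hxZ] at this
    omega
  have hcx : (insert x Z).card = k := by rw [Finset.card_insert_of_notMem hxZ, hZk]
  have hcy : (insert y Z).card = k := by rw [Finset.card_insert_of_notMem hyZ, hZk]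
  -- left
  obtain ⟨P, hP1, hP2⟩ := ih _ (lt_of_le_of_lt (Finset.card_filter_le R' (fun p => p.1 ∈ L ∧ p.2 ∈ L)) hc) _ rfl A (insert x Z) k (by
    intro L1 R1 hc1 hA1 hZ1 hcl1
    have hxR1 : x ∈ R1 := hZ1 (Finset.mem_insert_self _ _)
    have := hk (L1 ∩ L) (R1 ∪ Q) (by
        intro z; have := hLQ z; have := hc1 z
        simp only [Finset.mem_inter, Finset.mem_union]; tauto)
      (Finset.subset_inter hA1 hAL) (hBQ.trans Finset.subset_union_right) (by
        intro u w h hu hu'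
        simp only [Finset.mem_inter, Finset.mem_union, not_or] at hu hu' ⊢
        rcases hsub u w h with h' | ⟨rfl, rfl⟩
        · have hw := hcl u w h' hu.2 hu'.2
          exact ⟨hcl1 u w (Finset.mem_filter.2 ⟨h', hu.2, hw⟩) hu.1 hu'.1, hw⟩
        · exact absurd hxR1 hu'.1)
    refine this.trans (Finset.card_le_card ?_)
    intro z hz
    simp only [Finset.mem_inter, Finset.mem_union] at hz ⊢
    refine ⟨hz.1.1, ?_⟩
    rcases hz.2 with h | h
    · exact h
    · exact hZ1 (Finset.mem_insert_of_mem (Finset.mem_inter.2 ⟨hz.1.2, h⟩)))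
  obtain ⟨S, hS1, hS2⟩ := ih _ (lt_of_le_of_lt (Finset.card_filter_le R' (fun p => p.1 ∈ Q ∧ p.2 ∈ Q)) hc) _ rfl (insert y Z) B k (by
    intro L1 R1 hc1 hZ1 hB1 hcl1
    have hyL1 : y ∈ L1 := hZ1 (Finset.mem_insert_self _ _)
    have := hk (L ∪ L1) (Q ∩ R1) (by
        intro z; have := hLQ z; have := hc1 z
        simp only [Finset.mem_inter, Finset.mem_union]; tauto)
      (hAL.trans Finset.subset_union_left) (Finset.subset_inter hBQ hB1) (by
        intro u w h hu hu'
        simp only [Finset.mem_inter, Finset.mem_union] at hu hu' ⊢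
        rcases hsub u w h with h' | ⟨rfl, rfl⟩
        · by_contra hw
          push Not at hw
          have hwQ := (hLQ w).resolve_left hw.1
          by_cases huQ : u ∈ Q
          · have huR : u ∉ R1 := fun h => hu' ⟨huQ, h⟩
            exact hw.2 (hcl1 u w (Finset.mem_filter.2 ⟨h', huQ, hwQ⟩) ((hc1 u).resolve_right huR) huR)
          · exact hw.1 (hcl u w h' ((hLQ u).resolve_right huQ) huQ)
        · exact Or.inr hyL1)
    refine this.trans (Finset.card_le_card ?_)
    intro z hz
    simp only [Finset.mem_inter, Finset.mem_union] at hz ⊢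
    refine ⟨?_, hz.2.2⟩
    rcases hz.1 with h | h
    · exact hZ1 (Finset.mem_insert_of_mem (Finset.mem_inter.2 ⟨h, hz.2.1⟩))
    · exact h)
  choose a haA e heZ haP heP hPr using hP2
  choose s hsZ b hbB hsS hbS hSr using hS2
  have hej : Function.Injective e := fun i j h => hP1 i j (e i) (heP i) (h ▸ heP j)
  have hsj : Function.Injective s := fun i j h => hS1 i j (s i) (hsS i) (h ▸ hsS j)
  have surj : ∀ (f : Fin k → X) (W : Finset X), Function.Injective f → W.card = k → (∀ i, f i ∈ W) →
      ∀ z ∈ W, ∃ i, f i = z := by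
    intro f W hf hW hfW z hz
    have : Finset.univ.image f = W := by
      apply Finset.eq_of_subset_of_card_le
      · intro z hz; obtain ⟨i, -, rfl⟩ := Finset.mem_image.1 hz; exact hfW i
      · rw [Finset.card_image_of_injective _ hf, hW]; simp
    rw [← this] at hz
    obtain ⟨i, -, h⟩ := Finset.mem_image.1 hz
    exact ⟨i, h⟩
  have huE : ∀ i, ∀ z ∈ insert x Z, z ∈ P i → z = e i := by
    intro i z hz hzi
    obtain ⟨j, rfl⟩ := surj e _ hej hcx heZ z hz
    rw [hP1 i j _ hzi (heP j)]
  have huS : ∀ i, ∀ z ∈ insert y Z, z ∈ S i → z = s i := by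
    intro i z hz hzi
    obtain ⟨j, rfl⟩ := surj s _ hsj hcy hsZ z hz
    rw [hS1 i j _ hzi (hsS j)]
  have hj : ∀ i, ∃ j, (e i ∈ Z ∧ s j = e i) ∨ (e i = x ∧ s j = y) := by
    intro i
    rcases Finset.mem_insert.1 (heZ i) with h | h
    · obtain ⟨j, hj⟩ := surj s _ hsj hcy hsZ y (Finset.mem_insert_self _ _)
      exact ⟨j, Or.inr ⟨h, hj⟩⟩
    · obtain ⟨j, hj⟩ := surj s _ hsj hcy hsZ (e i) (Finset.mem_insert_of_mem h)
      exact ⟨j, Or.inl ⟨h, hj⟩⟩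
  choose j hj using hj
  have hjinj : ∀ i i', j i = j i' → i = i' := by
    intro i i' h
    apply hej
    have h1 := hj i
    have h2 := hj i'
    rw [h] at h1
    rcases h1 with h1 | h1 <;> rcases h2 with h2 | h2
    · exact h1.2.symm.trans h2.2
    · exact absurd (h2.2.symm.trans h1.2 ▸ h1.1) hyZ
    · exact absurd (h1.2.symm.trans h2.2 ▸ h2.1) hyZ
    · exact h1.1.trans h2.1.symm
  have hcross : ∀ i i' w, w ∈ P i → w ∈ L → w ∈ S (j i') → w ∈ Q → i = i' := by
    intro i i' w h1 h2 h3 h4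
    have hw : w ∈ Z := Finset.mem_inter.2 ⟨h2, h4⟩
    have e1 := huE i w (Finset.mem_insert_of_mem hw) h1
    have e2 := huS _ w (Finset.mem_insert_of_mem hw) h3
    apply hej
    rcases hj i' with h | h
    · rw [← e1, e2, h.2]
    · rw [h.2] at e2; exact absurd (e2 ▸ hw) hyZ
  refine ⟨fun i => (P i ∩ L) ∪ (S (j i) ∩ Q), ?_, ?_⟩
  · intro i i' w hi hi'
    simp only [Finset.mem_union, Finset.mem_inter] at hi hi'
    rcases hi with hi | hi <;> rcases hi' with hi' | hi'
    · exact hP1 _ _ w hi.1 hi'.1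
    · exact hcross i i' w hi.1 hi.2 hi'.1 hi'.2
    · exact (hcross i' i w hi'.1 hi'.2 hi.1 hi.2).symm
    · exact hjinj _ _ (hS1 _ _ w hi.1 hi'.1)
  · intro i
    have heL : e i ∈ L := by
      rcases hj i with h | h
      · exact (Finset.mem_inter.1 h.1).1
      · rw [h.1]; exact hxL
    have hsQ : s (j i) ∈ Q := by
      rcases hj i with h | h
      · rw [h.2]; exact (Finset.mem_inter.1 h.1).2
      · rw [h.2]; exact hyQ
    refine ⟨a i, haA i, b (j i), hbB _, ?_, ?_, ?_⟩
    · simp [haP i, hAL (haA i)]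
    · simp [hbS (j i), hBQ (hbB (j i))]
    · refine Relation.ReflTransGen.trans (b := e i) (Relation.ReflTransGen.mono ?_ _ _ (hPr i)) (Relation.ReflTransGen.trans (b := s (j i)) ?_ (Relation.ReflTransGen.mono ?_ _ _ (hSr (j i))))
      · rintro u w ⟨h1, h2, h3⟩
        simp only [Finset.mem_filter] at h1
        refine ⟨hsub' _ h1.1, ?_, ?_⟩ <;> simp [h2, h3, h1.2.1, h1.2.2]
      · rcases hj i with h | h
        · rw [h.2]
        · refine .single ⟨?_, ?_, ?_⟩
          · rw [h.1, h.2]; exact hxy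
          · simp [heP i, heL]
          · simp [hsS (j i), hsQ]
      · rintro u w ⟨h1, h2, h3⟩
        simp only [Finset.mem_filter] at h1
        refine ⟨hsub' _ h1.1, ?_, ?_⟩ <;> simp [h2, h3, h1.2.1, h1.2.2]

section EntropyLemmas
open Matrix ComplexOrder

theorem eigAux {m : Type} [Fintype m] [DecidableEq m] (M : Matrix m m ℂ) (hH : M.IsHermitian)
    (μ : m → m → ℕ) (hM : ∀ i j, M i j = (μ i j : ℂ)) (K : ℕ) (hK : ∀ i, ∑ j, μ i j ≤ K) (i : m) :
    hH.eigenvalues i ≤ (K : ℝ) := by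
  have hv := hH.mulVec_eigenvectorBasis i
  have hv0 : ∃ j, (hH.eigenvectorBasis i) j ≠ 0 := by
    by_contra h
    push Not at h
    apply hH.eigenvectorBasis.orthonormal.ne_zero i
    ext j
    exact h j
  generalize hH.eigenvectorBasis i = v at hv hv0
  have : Nonempty m := ⟨i⟩
  obtain ⟨i0, hi0⟩ := Finite.exists_max (fun j => ‖v j‖)
  have hpos : 0 < ‖v i0‖ := by
    obtain ⟨j, hj⟩ := hv0
    exact lt_of_lt_of_le (norm_pos_iff.2 hj) (hi0 j)
  have h1 := congrArg norm (congrFun hv i0)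
  have h3 : ‖(hH.eigenvalues i • (v : m → ℂ)) i0‖ = |hH.eigenvalues i| * ‖v i0‖ := by
    rw [Pi.smul_apply, norm_smul, Real.norm_eq_abs]
  rw [h3] at h1
  have h4 : ‖(M *ᵥ (v : m → ℂ)) i0‖ ≤ ∑ j, (μ i0 j : ℝ) * ‖v i0‖ := by
    rw [Matrix.mulVec, dotProduct]
    refine (norm_sum_le _ _).trans (Finset.sum_le_sum fun j _ => ?_)
    rw [norm_mul, hM, Complex.norm_natCast]
    exact mul_le_mul_of_nonneg_left (hi0 j) (by positivity)
  rw [h1, ← Finset.sum_mul] at h4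
  have h5 := le_of_mul_le_mul_right h4 hpos
  refine (le_abs_self _).trans (h5.trans ?_)
  exact_mod_cast hK i0

theorem entAux_upper {m n : Type} [Fintype m] [Fintype n] [DecidableEq m]
    (C : Matrix m n ℂ) (hC : C ≠ 0) :
    -∑ i, ((Matrix.isHermitian_mul_conjTranspose_self C).eigenvalues i / (C * Cᴴ).trace.re) *
        Real.log ((Matrix.isHermitian_mul_conjTranspose_self C).eigenvalues i / (C * Cᴴ).trace.re)
      ≤ Real.log C.rank := by
  set hH := Matrix.isHermitian_mul_conjTranspose_self C
  have htr : (C * Cᴴ).trace.re = ∑ i, hH.eigenvalues i := by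
    rw [hH.trace_eq_sum_eigenvalues]; simp
  have hnn : ∀ i, 0 ≤ hH.eigenvalues i := fun i => eigenvalues_self_mul_conjTranspose_nonneg C i
  have hrank : C.rank = (Finset.univ.filter (fun i => hH.eigenvalues i ≠ 0)).card := by
    rw [← rank_self_mul_conjTranspose C, hH.rank_eq_card_non_zero_eigs, Fintype.card_subtype]
  set t := (C * Cᴴ).trace.re
  have hrpos : 0 < C.rank := by
    rw [Nat.pos_iff_ne_zero]
    intro h
    rw [hrank, Finset.card_eq_zero, Finset.filter_eq_empty_iff] at h
    apply hC
    apply Matrix.self_mul_conjTranspose_eq_zero.1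
    apply hH.eigenvalues_eq_zero_iff.1
    funext i
    simpa using h (Finset.mem_univ i)
  have ht : 0 < t := by
    rw [htr]
    rw [hrank, Finset.card_pos] at hrpos
    obtain ⟨i, hi⟩ := hrpos
    exact Finset.sum_pos' (fun i _ => hnn i) ⟨i, Finset.mem_univ _, lt_of_le_of_ne (hnn i) (Ne.symm (Finset.mem_filter.1 hi).2)⟩
  set p := fun i => hH.eigenvalues i / t
  have hp : ∀ i, 0 ≤ p i := fun i => div_nonneg (hnn i) ht.le
  have hs : ∑ i, p i = 1 := by
    simp only [p]; rw [← Finset.sum_div, ← htr]; exact div_self ht.ne'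
  have hr : (0:ℝ) < C.rank := by exact_mod_cast hrpos
  have key : ∀ i, -(p i * Real.log (p i)) - p i * Real.log C.rank ≤
      (if hH.eigenvalues i ≠ 0 then (C.rank:ℝ)⁻¹ else 0) - p i := by
    intro i
    by_cases h : hH.eigenvalues i = 0
    · simp [p, h]
    · have hpi : 0 < p i := div_pos (lt_of_le_of_ne (hnn i) (Ne.symm h)) ht
      have h1 := Real.log_le_sub_one_of_pos (x := (p i)⁻¹ * (C.rank:ℝ)⁻¹) (by positivity)
      rw [Real.log_mul (by positivity) (by positivity), Real.log_inv, Real.log_inv] at h1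
      have h2 := mul_le_mul_of_nonneg_left h1 hpi.le
      have h3 : p i * ((p i)⁻¹ * (C.rank:ℝ)⁻¹ - 1) = (C.rank:ℝ)⁻¹ - p i := by
        field_simp
      rw [h3] at h2
      simp only [ne_eq, h, not_false_eq_true, if_true]
      linarith
  have := Finset.sum_le_sum (fun i (_ : i ∈ Finset.univ) => key i)
  rw [Finset.sum_sub_distrib, Finset.sum_sub_distrib, ← Finset.sum_mul, hs, ← Finset.sum_filter,
    Finset.sum_const, ← hrank, Finset.sum_neg_distrib, nsmul_eq_mul, mul_inv_cancel₀ hr.ne'] at this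
  change -∑ i, p i * Real.log (p i) ≤ _
  linarith

theorem entAux_lower {m n Ω : Type} [Fintype m] [Fintype n] [DecidableEq m] [DecidableEq n]
    (C : Matrix m n ℂ) (Gd : Finset Ω) (a : Ω → n) (b : Ω → m)
    (hCdef : ∀ i j, C i j = ((Gd.filter (fun W => a W = j ∧ b W = i)).card : ℂ))
    (K1 K2 D : ℕ) (hK1 : 0 < K1) (hK2 : 0 < K2) (hD : 0 < D)
    (hrow : ∀ i, ∀ s ⊆ Gd, (∀ W ∈ s, b W = i) → s.card ≤ K1)
    (hcol : ∀ j, ∀ s ⊆ Gd, (∀ W ∈ s, a W = j) → s.card ≤ K2)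
    (hcard : D * (K1 * K2) ≤ Gd.card) :
    C ≠ 0 ∧ Real.log D ≤
    -∑ i, ((Matrix.isHermitian_mul_conjTranspose_self C).eigenvalues i / (C * Cᴴ).trace.re) *
        Real.log ((Matrix.isHermitian_mul_conjTranspose_self C).eigenvalues i / (C * Cᴴ).trace.re) := by
  set hH := Matrix.isHermitian_mul_conjTranspose_self C
  have htr : (C * Cᴴ).trace.re = ∑ i, hH.eigenvalues i := by
    rw [hH.trace_eq_sum_eigenvalues]; simp
  have hnn : ∀ i, 0 ≤ hH.eigenvalues i := fun i => eigenvalues_self_mul_conjTranspose_nonneg C i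
  set c : m → n → ℕ := fun i j => (Gd.filter (fun W => a W = j ∧ b W = i)).card with hc
  have hCc : ∀ i j, C i j = (c i j : ℂ) := hCdef
  have hrow' : ∀ i, ∑ j, c i j = (Gd.filter (fun W => b W = i)).card := by
    intro i
    rw [Finset.card_eq_sum_card_fiberwise (f := a) (t := Finset.univ) (by simp)]
    refine Finset.sum_congr rfl fun j _ => ?_
    rw [Finset.filter_filter]
    simp only [hc]; congr 1; ext W; simp; tauto
  have hcol' : ∀ j, ∑ i, c i j = (Gd.filter (fun W => a W = j)).card := by
    intro i
    rw [Finset.card_eq_sum_card_fiberwise (f := b) (t := Finset.univ) (by simp)]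
    refine Finset.sum_congr rfl fun j _ => ?_
    rw [Finset.filter_filter]
  have htot : ∑ i, ∑ j, c i j = Gd.card := by
    simp_rw [hrow']
    exact (Finset.card_eq_sum_card_fiberwise (f := b) (t := Finset.univ) (by simp)).symm
  have htr2 : (C * Cᴴ).trace.re = ((∑ i, ∑ j, c i j * c i j : ℕ) : ℝ) := by
    have : (C * Cᴴ).trace = ((∑ i, ∑ j, c i j * c i j : ℕ) : ℂ) := by
      simp [Matrix.trace, Matrix.mul_apply, hCc]
    rw [this, Complex.natCast_re]
  set t := (C * Cᴴ).trace.re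
  have htge : ((D * (K1 * K2) : ℕ) : ℝ) ≤ t := by
    rw [htr2]
    norm_cast
    refine hcard.trans (htot ▸ Finset.sum_le_sum fun i _ => Finset.sum_le_sum fun j _ => Nat.le_mul_self _)
  have hKpos : (0:ℝ) < (K1 * K2 : ℕ) := by exact_mod_cast Nat.mul_pos hK1 hK2
  have hDpos : (0:ℝ) < D := by exact_mod_cast hD
  have ht : 0 < t := by
    refine lt_of_lt_of_le ?_ htge
    exact_mod_cast Nat.mul_pos hD (Nat.mul_pos hK1 hK2)
  have hlam : ∀ i, hH.eigenvalues i ≤ (K1 * K2 : ℕ) := by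
    intro i
    refine (eigAux (C * Cᴴ) hH (fun i j => ∑ l, c i l * c j l) (by
      intro i j; simp [Matrix.mul_apply, hCc]) (K1 * K2) ?_ i)
    intro i0
    rw [Finset.sum_comm]
    calc ∑ l, ∑ j, c i0 l * c j l = ∑ l, c i0 l * ∑ j, c j l := by simp_rw [Finset.mul_sum]
      _ ≤ ∑ l, c i0 l * K2 := Finset.sum_le_sum fun l _ => Nat.mul_le_mul_left _ (hcol' l ▸ hcol l _ (Finset.filter_subset _ _) (fun W hW => (Finset.mem_filter.1 hW).2))
      _ = (∑ l, c i0 l) * K2 := by rw [Finset.sum_mul]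
      _ ≤ K1 * K2 := Nat.mul_le_mul_right _ (hrow' i0 ▸ hrow i0 _ (Finset.filter_subset _ _) (fun W hW => (Finset.mem_filter.1 hW).2))
  constructor
  · rintro h
    have : t = 0 := by simp only [t]; rw [h]; simp
    exact ht.ne' this
  set p := fun i => hH.eigenvalues i / t
  have hp : ∀ i, 0 ≤ p i := fun i => div_nonneg (hnn i) ht.le
  have hs : ∑ i, p i = 1 := by
    simp only [p]; rw [← Finset.sum_div, ← htr]; exact div_self ht.ne'
  have key : ∀ i, p i * Real.log D ≤ -(p i * Real.log (p i)) := by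
    intro i
    rcases (hp i).eq_or_lt with h | h
    · rw [← h]; simp
    · have h1 : p i ≤ (D:ℝ)⁻¹ := by
        simp only [p]
        rw [div_le_iff₀ ht]
        refine (hlam i).trans ?_
        rw [inv_mul_eq_div, le_div_iff₀ hDpos]
        refine le_trans (le_of_eq ?_) htge
        push_cast; ring
      have h2 := Real.log_le_log h h1
      rw [Real.log_inv] at h2
      nlinarith
  have := Finset.sum_le_sum (fun i (_ : i ∈ Finset.univ) => key i)
  rw [← Finset.sum_mul, hs, Finset.sum_neg_distrib, one_mul] at this
  exact this

end EntropyLemmas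

section RankLemmas

theorem splitAux {E : Type} [Fintype E] [DecidableEq E] {κ : E → Type} [∀ e, Fintype (κ e)] {m n : Type} [Fintype m] [Fintype n]
    (p q : E → Prop)
    (Φ : n → ((e : E) → κ e) → ℂ) (Ψ : m → ((e : E) → κ e) → ℂ)
    (hΦ : ∀ j W W', (∀ e, p e → W e = W' e) → Φ j W = Φ j W')
    (hΨ : ∀ i W W', (∀ e, q e → W e = W' e) → Ψ i W = Ψ i W')
    (M : Matrix m n ℂ) (hM : ∀ i j, M i j = ∑ W, Ψ i W * Φ j W) :
    M.rank ≤ Nat.card ((e : {e // p e ∧ q e}) → κ e) := by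
  let Γ := (e : {e // p e ∧ q e}) → κ e
  let res : ((e : E) → κ e) → Γ := fun W e => W e
  let fib : Γ → Finset ((e : E) → κ e) := fun g => Finset.univ.filter (fun W => res W = g)
  let mix : ((e : E) → κ e) → ((e : E) → κ e) → ((e : E) → κ e) := fun W W' e => if p e then W e else W' e
  let A : Matrix Γ n ℂ := fun g j => ∑ W ∈ fib g, Φ j W
  let B : Matrix m Γ ℂ := fun i g => ((fib g).card : ℂ)⁻¹ * ∑ W ∈ fib g, Ψ i W
  have hmem : ∀ g W, W ∈ fib g ↔ res W = g := by intro g W; simp [fib]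
  have hmixmem : ∀ g W W', W ∈ fib g → W' ∈ fib g → mix W W' ∈ fib g := by
    intro g W W' h h'
    rw [hmem] at h h' ⊢
    rw [← h]
    funext e
    simp [res, mix, e.2.1]
  have hmm : ∀ W W', mix (mix W W') (mix W' W) = W := by
    intro W W'; funext e; by_cases h : p e <;> simp [mix, h]
  have key : ∀ g i j, (∑ W ∈ fib g, Ψ i W) * (∑ W ∈ fib g, Φ j W)
      = ((fib g).card : ℂ) * ∑ W ∈ fib g, Ψ i W * Φ j W := by
    intro g i j
    have h1 : ((fib g).card : ℂ) * ∑ W ∈ fib g, Ψ i W * Φ j W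
        = ∑ x ∈ fib g ×ˢ fib g, Ψ i x.1 * Φ j x.1 := by
      rw [Finset.sum_product, Finset.mul_sum]
      refine Finset.sum_congr rfl fun W _ => ?_
      simp
    have h2 : (∑ W ∈ fib g, Ψ i W) * (∑ W ∈ fib g, Φ j W)
        = ∑ x ∈ fib g ×ˢ fib g, Ψ i x.2 * Φ j x.1 := by
      rw [Finset.sum_product, Finset.mul_sum]
      refine Finset.sum_congr rfl fun W _ => ?_
      rw [Finset.sum_mul]
    rw [h1, h2]
    refine Finset.sum_nbij' (fun x => (mix x.1 x.2, mix x.2 x.1)) (fun x => (mix x.1 x.2, mix x.2 x.1)) ?_ ?_ ?_ ?_ ?_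
    · intro x hx
      rw [Finset.mem_product] at hx ⊢
      exact ⟨hmixmem _ _ _ hx.1 hx.2, hmixmem _ _ _ hx.2 hx.1⟩
    · intro x hx
      rw [Finset.mem_product] at hx ⊢
      exact ⟨hmixmem _ _ _ hx.1 hx.2, hmixmem _ _ _ hx.2 hx.1⟩
    · intro x _; simp [hmm]
    · intro x _; simp [hmm]
    · intro x hx
      rw [Finset.mem_product, hmem, hmem] at hx
      congr 1
      · apply hΨ
        intro e he
        by_cases h : p e
        · have := congrFun (hx.2.trans hx.1.symm) ⟨e, h, he⟩
          simpa [mix, h, res] using this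
        · simp [mix, h]
      · apply hΦ
        intro e he
        simp [mix, he]
  have hMBA : M = B * A := by
    ext i j
    rw [hM, Matrix.mul_apply, ← Finset.sum_fiberwise Finset.univ res]
    refine Finset.sum_congr rfl fun g _ => ?_
    change ∑ W ∈ fib g, Ψ i W * Φ j W = (((fib g).card : ℂ)⁻¹ * ∑ W ∈ fib g, Ψ i W) * (∑ W ∈ fib g, Φ j W)
    rw [mul_assoc, key]
    by_cases h : (fib g).card = 0
    · rw [Finset.card_eq_zero.1 h]; simp
    · rw [inv_mul_cancel_left₀]; exact_mod_cast h
  rw [hMBA]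
  rw [Nat.card_eq_fintype_card]
  exact (Matrix.rank_mul_le_left B A).trans (Matrix.rank_le_card_width B)

theorem TN.inEdge_spec_s12 (N : TN) (u : N.S) : ∃ i, N.ends (N.inEdge u) i = Sum.inr (Sum.inl u) :=
  ⟨(N.openS u).choose.2, (N.openS u).choose_spec.1⟩

theorem TN.outEdge_spec_s12 (N : TN) (u : N.T) : ∃ i, N.ends (N.outEdge u) i = Sum.inr (Sum.inr u) :=
  ⟨(N.openT u).choose.2, (N.openT u).choose_spec.1⟩

theorem TN.inEdge_uniq (N : TN) (u : N.S) (e : N.E) (i : Fin 2) (h : N.ends e i = Sum.inr (Sum.inl u)) :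
    e = N.inEdge u :=
  congrArg Prod.fst ((N.openS u).choose_spec.2 (e, i) h)

theorem TN.outEdge_uniq (N : TN) (u : N.T) (e : N.E) (i : Fin 2) (h : N.ends e i = Sum.inr (Sum.inr u)) :
    e = N.outEdge u :=
  congrArg Prod.fst ((N.openT u).choose_spec.2 (e, i) h)

theorem TN.rank_le_cut_s12 (N : TN) (𝒯 : N.Assignment) (C : Finset N.E) (hC : N.IsCutSet C) :
    (N.β 𝒯).rank ≤ ∏ e ∈ C, N.c e := by
  obtain ⟨f, hfS, hfT, hfC⟩ := hC
  have h := splitAux (κ := fun e => Fin (N.c e)) (m := N.OutIdx) (n := N.InIdx)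
    (fun e => ∃ i, f (N.ends e i) = false) (fun e => ∃ i, f (N.ends e i) = true)
    (fun iS W => if (∀ u : N.S, W (N.inEdge u) = iS u) then
      ∏ v ∈ Finset.univ.filter (fun v : N.V => f (Sum.inl v) = false), 𝒯 v (fun p => W p.1.1) else 0)
    (fun iT W => if (∀ u : N.T, W (N.outEdge u) = iT u) then
      ∏ v ∈ Finset.univ.filter (fun v : N.V => ¬ f (Sum.inl v) = false), 𝒯 v (fun p => W p.1.1) else 0)
    (by
      intro iS W W' hW
      have h1 : ∀ u, W (N.inEdge u) = W' (N.inEdge u) := by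
        intro u; obtain ⟨i, hi⟩ := N.inEdge_spec_s12 u
        exact hW _ ⟨i, by rw [hi, hfS]⟩
      simp only [h1]
      congr 1
      refine Finset.prod_congr rfl fun v hv => ?_
      congr 1
      funext p
      exact hW _ ⟨p.1.2, by rw [p.2]; exact (Finset.mem_filter.1 hv).2⟩)
    (by
      intro iS W W' hW
      have h1 : ∀ u, W (N.outEdge u) = W' (N.outEdge u) := by
        intro u; obtain ⟨i, hi⟩ := N.outEdge_spec_s12 u
        exact hW _ ⟨i, by rw [hi, hfT]⟩
      simp only [h1]
      congr 1
      refine Finset.prod_congr rfl fun v hv => ?_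
      congr 1
      funext p
      exact hW _ ⟨p.1.2, by rw [p.2]; simpa using (Finset.mem_filter.1 hv).2⟩)
    (N.β 𝒯) (by
      intro i j
      refine Finset.sum_congr rfl fun W _ => ?_
      rw [← Finset.prod_filter_mul_prod_filter_not Finset.univ (fun v : N.V => f (Sum.inl v) = false)]
      by_cases h1 : (∀ u : N.S, W (N.inEdge u) = j u) <;>
        by_cases h2 : (∀ u : N.T, W (N.outEdge u) = i u) <;> simp [h1, h2, mul_comm])
  refine h.trans (le_of_eq ?_)
  rw [Nat.card_pi]
  simp only [Nat.card_fin]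
  symm
  refine Finset.prod_subtype C (fun e => ?_) N.c
  rw [hfC]
  simp only [Fin.exists_fin_two]
  cases f (N.ends e 0) <;> cases f (N.ends e 1) <;> simp

end RankLemmas

section FlowLemmas

theorem iteAux {a b c : Prop} {da : Decidable a} {db : Decidable b} {dc dc' : Decidable c} (h : a ↔ b) :
    (@ite ℂ a da (@ite ℂ c dc 1 0) 0) = @ite ℂ c dc' (@ite ℂ b db 1 0) 0 := by
  by_cases ha : a
  · have hb := h.1 ha
    by_cases hc : c <;> simp [ha, hb, hc]
  · have hb : ¬ b := fun hb => ha (h.2 hb)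
    by_cases hc : c <;> simp [ha, hb, hc]

theorem TN.low (N : TN) (d : ℕ) (hd : 0 < d) (m : N.E → ℕ) (hm : ∀ e, N.c e = d ^ m e) (k : ℕ)
    (hk : ∀ C, N.IsCutSet C → k ≤ ∑ e ∈ C, m e) :
    ∃ 𝒯 : N.Assignment, N.β 𝒯 ≠ 0 ∧ Real.log ((d ^ k : ℕ) : ℝ) ≤ N.EE 𝒯 := by
  let X : Type := Σ e : N.E, Fin (m e)
  let At : X → (N.V ⊕ N.S ⊕ N.T) → Prop := fun x n => ∃ i, N.ends x.1 i = n
  let R : Finset (X × X) := Finset.univ.filter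
    (fun p => ∃ v : N.V, At p.1 (Sum.inl v) ∧ At p.2 (Sum.inl v))
  let A : Finset X := Finset.univ.filter (fun x => ∃ u : N.S, At x (Sum.inr (Sum.inl u)))
  let B : Finset X := Finset.univ.filter (fun x => ∃ u : N.T, At x (Sum.inr (Sum.inr u)))
  have hR : ∀ x y, (x, y) ∈ R ↔ ∃ v : N.V, At x (Sum.inl v) ∧ At y (Sum.inl v) := by
    intro x y; simp [R]
  have hA : ∀ x, x ∈ A ↔ ∃ u : N.S, At x (Sum.inr (Sum.inl u)) := by intro x; simp [A]
  have hB : ∀ x, x ∈ B ↔ ∃ u : N.T, At x (Sum.inr (Sum.inr u)) := by intro x; simp [B]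
  have hsep : ∀ L Q : Finset X, (∀ x, x ∈ L ∨ x ∈ Q) → A ⊆ L → B ⊆ Q →
      (∀ u w, (u, w) ∈ R → u ∈ L → u ∉ Q → w ∈ L) → k ≤ (L ∩ Q).card := by
    intro L Q hLQ hAL hBQ hcl
    let f : N.V ⊕ N.S ⊕ N.T → Bool := fun n => match n with
      | Sum.inl v => decide (¬ ∃ x, At x (Sum.inl v) ∧ x ∉ Q)
      | Sum.inr (Sum.inl _) => false
      | Sum.inr (Sum.inr _) => true
    let C : Finset N.E := Finset.univ.filter (fun e => f (N.ends e 0) ≠ f (N.ends e 1))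
    have hC : N.IsCutSet C := ⟨f, fun _ => rfl, fun _ => rfl, fun e => by simp [C]⟩
    have ht : ∀ x n, At x n → f n = true → x ∈ Q := by
      intro x n hx hf
      match n, hx, hf with
      | Sum.inl v, hx, hf =>
        have hf' := of_decide_eq_true hf
        by_contra h
        exact hf' ⟨x, hx, h⟩
      | Sum.inr (Sum.inl _), hx, hf => exact absurd hf (by simp [f])
      | Sum.inr (Sum.inr u), hx, hf => exact hBQ ((hB x).2 ⟨u, hx⟩)
    have hff : ∀ x n, At x n → f n = false → x ∈ L := by
      intro x n hx hf
      match n, hx, hf with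
      | Sum.inl v, hx, hf =>
        have hf' := of_decide_eq_false hf
        rw [not_not] at hf'
        obtain ⟨y, hy, hyQ⟩ := hf'
        exact hcl y x ((hR _ _).2 ⟨v, hy, hx⟩) ((hLQ y).resolve_right hyQ) hyQ
      | Sum.inr (Sum.inr _), hx, hf => exact absurd hf (by simp [f])
      | Sum.inr (Sum.inl u), hx, hf => exact hAL ((hA x).2 ⟨u, hx⟩)
    refine (hk C hC).trans ?_
    have h1 : ∑ e ∈ C, m e = (C.sigma (fun e => (Finset.univ : Finset (Fin (m e))))).card := by
      rw [Finset.card_sigma]; simp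
    rw [h1]
    apply Finset.card_le_card
    intro x hx
    have hx' : f (N.ends x.1 0) ≠ f (N.ends x.1 1) := by
      have := (Finset.mem_sigma.1 hx).1
      exact (Finset.mem_filter.1 this).2
    rw [Finset.mem_inter]
    have e0 := ht x _ ⟨0, rfl⟩
    have e1 := ht x _ ⟨1, rfl⟩
    have e2 := hff x _ ⟨0, rfl⟩
    have e3 := hff x _ ⟨1, rfl⟩
    revert hx' e0 e1 e2 e3
    cases f (N.ends x.1 0) <;> cases f (N.ends x.1 1) <;> simp <;> tauto
  obtain ⟨P0, hP0, hconn⟩ := mengerAux _ R rfl A B k hsep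
  choose a haA b hbB haP hbP hab using hconn
  let P : Fin k → Finset X := fun j => (P0 j).filter
    (fun x => Relation.ReflTransGen (fun u w => (u, w) ∈ R ∧ u ∈ P0 j ∧ w ∈ P0 j) (a j) x)
  have hPd : ∀ i j x, x ∈ P i → x ∈ P j → i = j := fun i j x hi hj =>
    hP0 i j x (Finset.mem_filter.1 hi).1 (Finset.mem_filter.1 hj).1
  have haP' : ∀ j, a j ∈ P j := fun j => Finset.mem_filter.2 ⟨haP j, .refl⟩
  have hbP' : ∀ j, b j ∈ P j := fun j => Finset.mem_filter.2 ⟨hbP j, hab j⟩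
  have hconst : ∀ (w : X → Fin d) (j : Fin k),
      (∀ x y, x ∈ P j → y ∈ P j → (x, y) ∈ R → w x = w y) → ∀ x ∈ P j, w x = w (a j) := by
    intro w j hw x hx
    have hr := (Finset.mem_filter.1 hx).2
    clear hx
    induction hr with
    | refl => rfl
    | tail h1 h2 ih =>
      rw [← ih]
      exact (hw _ _ (Finset.mem_filter.2 ⟨h2.2.1, h1⟩) (Finset.mem_filter.2 ⟨h2.2.2, h1.tail h2⟩) h2.1).symm
  let dec : (e : N.E) → Fin (N.c e) ≃ (Fin (m e) → Fin d) := fun e =>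
    (finCongr (hm e)).trans finFunctionFinEquiv.symm
  let z0 : Fin d := ⟨0, hd⟩
  let val : ((e : N.E) → Fin (N.c e)) → X → Fin d := fun W x => dec x.1 (W x.1) x.2
  have hval : ∀ W W', (∀ x, val W x = val W' x) → W = W' := by
    intro W W' h
    funext e
    apply (dec e).injective
    funext i
    exact h ⟨e, i⟩
  let Cond : (v : N.V) → ((p : N.Legs v) → Fin (N.c p.1.1)) → Prop := fun v g =>
    (∀ (p q : N.Legs v) (i : Fin (m p.1.1)) (i' : Fin (m q.1.1)) (j : Fin k),
      (⟨p.1.1, i⟩ : X) ∈ P j → (⟨q.1.1, i'⟩ : X) ∈ P j → dec _ (g p) i = dec _ (g q) i') ∧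
    (∀ (p : N.Legs v) (i : Fin (m p.1.1)), (∀ j, (⟨p.1.1, i⟩ : X) ∉ P j) → dec _ (g p) i = z0)
  let 𝒯 : N.Assignment := fun v g => if Cond v g then 1 else 0
  let Gd : Finset ((e : N.E) → Fin (N.c e)) :=
    Finset.univ.filter (fun W => ∀ v, Cond v (fun p => W p.1.1))
  have hGd : ∀ W, W ∈ Gd ↔ ((∀ x y j, x ∈ P j → y ∈ P j → (x, y) ∈ R → val W x = val W y) ∧
      (∀ x (v : N.V), At x (Sum.inl v) → (∀ j, x ∉ P j) → val W x = z0)) := by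
    intro W
    simp only [Gd, Finset.mem_filter, Finset.mem_univ, true_and]
    constructor
    · intro h
      refine ⟨?_, ?_⟩
      · intro x y j hx hy hxy
        obtain ⟨v, ⟨i, hi⟩, ⟨i', hi'⟩⟩ := (hR x y).1 hxy
        exact (h v).1 ⟨(x.1, i), hi⟩ ⟨(y.1, i'), hi'⟩ x.2 y.2 j hx hy
      · rintro x v ⟨i, hi⟩ hx
        exact (h v).2 ⟨(x.1, i), hi⟩ x.2 hx
    · rintro ⟨h1, h2⟩ v
      refine ⟨?_, ?_⟩
      · intro p q i i' j hp hq
        exact h1 ⟨p.1.1, i⟩ ⟨q.1.1, i'⟩ j hp hq ((hR _ _).2 ⟨v, ⟨p.1.2, p.2⟩, ⟨q.1.2, q.2⟩⟩)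
      · intro p i hp
        exact h2 ⟨p.1.1, i⟩ v ⟨p.1.2, p.2⟩ hp
  have uniq : ∀ D : Finset X, (∀ j, ∃ x ∈ P j, x ∈ D) → ∀ W ∈ Gd, ∀ W' ∈ Gd,
      (∀ x ∈ D, val W x = val W' x) →
      (∀ x, ((∀ j, x ∉ P j) ∧ (∀ v : N.V, ¬ At x (Sum.inl v)) ∧ x ∉ D) → val W x = val W' x) → W = W' := by
    intro D hD W hW W' hW' h1 h2
    rw [hGd] at hW hW'
    apply hval
    intro x
    by_cases hx : ∃ j, x ∈ P j
    · obtain ⟨j, hj⟩ := hx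
      obtain ⟨y, hy, hyD⟩ := hD j
      have c1 := hconst (val W) j (fun x y hx hy h => hW.1 x y j hx hy h)
      have c2 := hconst (val W') j (fun x y hx hy h => hW'.1 x y j hx hy h)
      rw [c1 x hj, c2 x hj, ← c1 y hy, ← c2 y hy]
      exact h1 y hyD
    · push Not at hx
      by_cases hv : ∃ v : N.V, At x (Sum.inl v)
      · obtain ⟨v, hv⟩ := hv
        rw [hW.2 x v hv hx, hW'.2 x v hv hx]
      · push Not at hv
        by_cases hxD : x ∈ D
        · exact h1 x hxD
        · exact h2 x ⟨hx, hv, hxD⟩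
  let F : Finset X → Finset X := fun D =>
    Finset.univ.filter (fun x => (∀ j, x ∉ P j) ∧ (∀ v : N.V, ¬ At x (Sum.inl v)) ∧ x ∉ D)
  have hF : ∀ D x, x ∈ F D ↔ ((∀ j, x ∉ P j) ∧ (∀ v : N.V, ¬ At x (Sum.inl v)) ∧ x ∉ D) := by
    intro D x; simp [F]
  have cardB : ∀ (D : Finset X) (s : Finset ((e : N.E) → Fin (N.c e))), s ⊆ Gd →
      (∀ j, ∃ x ∈ P j, x ∈ D) → (∀ W ∈ s, ∀ W' ∈ s, ∀ x ∈ D, val W x = val W' x) →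
      s.card ≤ d ^ (F D).card := by
    intro D s hs hD h1
    have : s.card ≤ (Finset.univ : Finset ((F D) → Fin d)).card := by
      refine Finset.card_le_card_of_injOn (fun W x => val W x.1) (by simp) ?_
      intro W hW W' hW' h
      refine uniq D hD W (hs hW) W' (hs hW') (h1 W hW W' hW') ?_
      intro x hx
      exact congrFun h ⟨x, (hF D x).2 hx⟩
    simpa using this
  have main := entAux_lower (N.β 𝒯) Gd (fun W => (fun u => W (N.inEdge u) : N.InIdx))
    (fun W => (fun u => W (N.outEdge u) : N.OutIdx)) (by
      intro i j
      have h1 : ∀ W : (e : N.E) → Fin (N.c e), ∏ v : N.V, 𝒯 v (fun p => W p.1.1) =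
          if ∀ v, Cond v (fun p => W p.1.1) then 1 else 0 := by
        intro W
        simp only [𝒯]
        rw [Fintype.prod_ite_zero]; simp
      simp only [TN.β, h1]
      rw [← Finset.sum_boole, Finset.sum_filter]
      refine Finset.sum_congr rfl fun W _ => ?_
      exact iteAux ⟨fun h' => ⟨funext h'.1, funext h'.2⟩, fun h' => ⟨congrFun h'.1, congrFun h'.2⟩⟩)
    (d ^ (F B).card) (d ^ (F A).card) (d ^ k) (pow_pos hd _) (pow_pos hd _) (pow_pos hd _)
    (by
      intro i s hs hsi
      refine cardB B s hs (fun j => ⟨b j, hbP' j, hbB j⟩) ?_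
      intro W hW W' hW' x hx
      obtain ⟨u, l, hl⟩ := (hB x).1 hx
      have e1 : W (N.outEdge u) = W' (N.outEdge u) := congrFun ((hsi W hW).trans (hsi W' hW').symm) u
      have e2 := N.outEdge_uniq u _ l hl
      rw [← e2] at e1
      simp only [val, e1])
    (by
      intro i s hs hsi
      refine cardB A s hs (fun j => ⟨a j, haP' j, haA j⟩) ?_
      intro W hW W' hW' x hx
      obtain ⟨u, l, hl⟩ := (hA x).1 hx
      have e1 : W (N.inEdge u) = W' (N.inEdge u) := congrFun ((hsi W hW).trans (hsi W' hW').symm) u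
      have e2 := N.inEdge_uniq u _ l hl
      rw [← e2] at e1
      simp only [val, e1])
    (by
      have hdisj : ∀ x, x ∈ F A → x ∈ F B → False := by
        intro x h1 h2
        rw [hF] at h1 h2
        have h3 : At x (N.ends x.1 0) := ⟨0, rfl⟩
        revert h3
        rcases N.ends x.1 0 with v | u | u <;> intro h3
        · exact h1.2.1 v h3
        · exact h1.2.2 ((hA x).2 ⟨u, h3⟩)
        · exact h2.2.2 ((hB x).2 ⟨u, h3⟩)
      let w : ((Fin k → Fin d) × (F B → Fin d) × (F A → Fin d)) → X → Fin d := fun t x =>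
        if h : ∃ j, x ∈ P j then t.1 h.choose
        else if h : x ∈ F B then t.2.1 ⟨x, h⟩
        else if h : x ∈ F A then t.2.2 ⟨x, h⟩ else z0
      have w1 : ∀ t x j, x ∈ P j → w t x = t.1 j := by
        intro t x j hx
        have h : ∃ j, x ∈ P j := ⟨j, hx⟩
        simp only [w, dif_pos h]
        rw [hPd _ _ x h.choose_spec hx]
      have w2 : ∀ t x (h : x ∈ F B), w t x = t.2.1 ⟨x, h⟩ := by
        intro t x h
        have h' : ¬ ∃ j, x ∈ P j := by push Not; exact ((hF _ _).1 h).1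
        simp only [w, dif_neg h', dif_pos h]
      have w3 : ∀ t x (h : x ∈ F A), w t x = t.2.2 ⟨x, h⟩ := by
        intro t x h
        have h' : ¬ ∃ j, x ∈ P j := by push Not; exact ((hF _ _).1 h).1
        have h'' : x ∉ F B := fun h2 => hdisj x h h2
        simp only [w, dif_neg h', dif_neg h'', dif_pos h]
      have w4 : ∀ t x (v : N.V), At x (Sum.inl v) → (∀ j, x ∉ P j) → w t x = z0 := by
        intro t x v hv h
        have h' : ¬ ∃ j, x ∈ P j := by push Not; exact h
        have h1 : x ∉ F B := fun h2 => ((hF _ _).1 h2).2.1 v hv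
        have h2 : x ∉ F A := fun h2 => ((hF _ _).1 h2).2.1 v hv
        simp only [w, dif_neg h', dif_neg h1, dif_neg h2]
      let Wt : ((Fin k → Fin d) × (F B → Fin d) × (F A → Fin d)) → ((e : N.E) → Fin (N.c e)) :=
        fun t e => (dec e).symm (fun i => w t ⟨e, i⟩)
      have hvW : ∀ t x, val (Wt t) x = w t x := by
        intro t x
        simp only [val, Wt, Equiv.apply_symm_apply]
        rfl
      have hle : (Finset.univ : Finset ((Fin k → Fin d) × (F B → Fin d) × (F A → Fin d))).card ≤ Gd.card := by
        refine Finset.card_le_card_of_injOn Wt ?_ ?_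
        · intro t _
          refine (hGd _).2 ⟨?_, ?_⟩
          · intro x y j hx hy _
            rw [hvW, hvW, w1 t x j hx, w1 t y j hy]
          · intro x v hv hx
            rw [hvW]; exact w4 t x v hv hx
        · intro t _ t' _ h
          have hw : ∀ x, w t x = w t' x := by
            intro x; rw [← hvW, ← hvW]; rw [h]
          refine Prod.ext ?_ (Prod.ext ?_ ?_)
          · funext j; rw [← w1 t _ j (haP' j), ← w1 t' _ j (haP' j)]; exact hw _
          · funext x; have := hw x.1; rwa [w2 t x.1 x.2, w2 t' x.1 x.2] at this
          · funext x; have := hw x.1; rwa [w3 t x.1 x.2, w3 t' x.1 x.2] at this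
      simpa using hle)
  exact ⟨𝒯, main.1, main.2⟩

end FlowLemmas

/-- If every edge capacity is a power of a fixed integer `d > 0`, the maximal entanglement
entropy between inputs and outputs equals the logarithm of the quantum min-cut. -/
theorem stmt_12 (N : TN) (d : ℕ) (hd : 0 < d)
    (h : ∀ e : N.E, ∃ m : ℕ, N.c e = d ^ m) :
    N.MEE = Real.log N.QMC := by

  classical
  choose m hm using h
  have hprod : ∀ C : Finset N.E, ∏ e ∈ C, N.c e = d ^ ∑ e ∈ C, m e := by
    intro C; rw [← Finset.prod_pow_eq_pow_sum]; exact Finset.prod_congr rfl fun e _ => hm e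
  have hne : ∃ C, N.IsCutSet C := by
    let f : N.V ⊕ N.S ⊕ N.T → Bool := fun n => match n with
      | Sum.inr (Sum.inl _) => false
      | _ => true
    exact ⟨Finset.univ.filter (fun e => f (N.ends e 0) ≠ f (N.ends e 1)), f, fun _ => rfl, fun _ => rfl,
      fun e => by simp⟩
  obtain ⟨C1, hC1⟩ := hne
  obtain ⟨C0, hC0, hmin⟩ := Finset.exists_min_image (Finset.univ.filter fun C => N.IsCutSet C)
    (fun C => ∑ e ∈ C, m e) ⟨C1, by simpa using hC1⟩
  have hC0' : N.IsCutSet C0 := by simpa using hC0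
  have hQle : N.QMC ≤ d ^ ∑ e ∈ C0, m e := Nat.sInf_le ⟨C0, hC0', (hprod C0).symm⟩
  obtain ⟨C2, hC2, hQ⟩ : N.QMC ∈ {m : ℕ | ∃ C : Finset N.E, N.IsCutSet C ∧ m = ∏ e ∈ C, N.c e} :=
    Nat.sInf_mem ⟨_, C1, hC1, rfl⟩
  have hQpos : 0 < N.QMC := by rw [hQ]; exact Finset.prod_pos fun e _ => N.c_pos e
  have hub : ∀ 𝒯 : N.Assignment, N.β 𝒯 ≠ 0 → N.EE 𝒯 ≤ Real.log N.QMC := by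
    intro 𝒯 h0
    have h1 : N.EE 𝒯 ≤ Real.log (N.β 𝒯).rank := entAux_upper (N.β 𝒯) h0
    refine h1.trans ?_
    have h2 : (N.β 𝒯).rank ≤ N.QMC := hQ ▸ N.rank_le_cut_s12 𝒯 C2 hC2
    rcases Nat.eq_zero_or_pos (N.β 𝒯).rank with h3 | h3
    · rw [h3]; simp; exact Real.log_natCast_nonneg _
    · exact Real.log_le_log (by exact_mod_cast h3) (by exact_mod_cast h2)
  obtain ⟨𝒯, h0, hlow⟩ := N.low d hd m hm (∑ e ∈ C0, m e) (fun C hC => hmin C (by simpa using hC))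
  apply le_antisymm
  · refine csSup_le ⟨_, 𝒯, h0, rfl⟩ ?_
    rintro x ⟨𝒯', h', rfl⟩
    exact hub 𝒯' h'
  · refine le_trans ?_ (le_csSup ⟨Real.log N.QMC, ?_⟩ ⟨𝒯, h0, rfl⟩)
    · refine le_trans (Real.log_le_log (by exact_mod_cast hQpos) (by exact_mod_cast hQle)) hlow
    · rintro x ⟨𝒯', h', rfl⟩
      exact hub 𝒯' h'
end
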